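/- For every integer N ≥ 2, every real p > 1, all positive reals f, F with f^p ≤ F, and every κ with c(N,p) ≤ κ ≤ 1, one has D_p(F,f,κ) = κ·f^p + ((N^p − 1)/(N^p − N))·(F − f^p), where D_p(F,f,κ) := inf { sup_{E measurable, μ(E)=κ} ∫_E (M_N φ)^p dμ : φ ≥ 0 measurable on [0,1), ∫ φ dμ = f, ∫ φ^p dμ = F }. -/

import Mathlib

open MeasureTheory Set Filter

/-- The `N`-adic interval `[k/N^m, (k+1)/N^m)` at level `m`. -/
def adicItv (N m k : ℕ) : Set ℝ :=
  Set.Ico ((k : ℝ) / (N : ℝ) ^ m) (((k : ℝ) + 1) / (N : ℝ) ^ m)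

/-- The average `(1/μ(I)) ∫_I |φ| dμ` of `φ` over the `N`-adic interval at level `m`, index `k`
(its measure is `N^{-m}`). -/
noncomputable def adicAvg (N : ℕ) (φ : ℝ → ℝ) (m k : ℕ) : ℝ :=
  (N : ℝ) ^ m * ∫ y in adicItv N m k, |φ y|

/-- The `N`-adic maximal operator on `[0,1)`:
`M_N φ(x) = sup { (1/μ(I)) ∫_I |φ| dμ : x ∈ I, I an N-adic interval }`. -/
noncomputable def adicMax (N : ℕ) (φ : ℝ → ℝ) (x : ℝ) : ℝ :=
  sSup {r : ℝ | ∃ m k : ℕ, k < N ^ m ∧ x ∈ adicItv N m k ∧ r = adicAvg N φ m k}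

/-- `sup { ∫_E (M_N φ)^p dμ : E ⊆ [0,1) measurable, μ(E) = κ }`. -/
noncomputable def supMeas (N : ℕ) (p κ : ℝ) (φ : ℝ → ℝ) : ℝ :=
  sSup {z : ℝ | ∃ E : Set ℝ, MeasurableSet E ∧ E ⊆ Set.Ico (0:ℝ) 1 ∧
    volume E = ENNReal.ofReal κ ∧ z = ∫ x in E, adicMax N φ x ^ p}

/-- The Bellman function `D_p(F,f,κ)`: the infimum of
`sup { ∫_E (M_N φ)^p dμ : μ(E) = κ }` over all nonnegative measurable `φ` on `[0,1)`
with `∫ φ dμ = f` and `∫ φ^p dμ = F`. -/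
noncomputable def Dp (N : ℕ) (p F f κ : ℝ) : ℝ :=
  sInf {y : ℝ | ∃ φ : ℝ → ℝ, Measurable φ ∧ (∀ x ∈ Set.Ico (0:ℝ) 1, 0 ≤ φ x) ∧
    (∫ x in Set.Ico (0:ℝ) 1, φ x) = f ∧ (∫ x in Set.Ico (0:ℝ) 1, φ x ^ p) = F ∧
    y = supMeas N p κ φ}

/-! Along nested `N`-adic intervals the averages of `φ` grow at most by the factor `N`. With
`C = (N ^ p - 1) / (N ^ p - N)`, convexity of `x ↦ x ^ p` gives
`l ^ p - C * l ^ (p - 1) * y ≤ (1 - C) * y ^ p` for `l ≤ y ≤ N * l`, so that the integral of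
`M ^ p - C * M ^ (p - 1) * φ` does not decrease when the running maximum `M`, started at `l`, is
updated level by level. Since `φ ≤ M_N φ` almost everywhere, in the limit
`∫ max l (M_N φ) ^ p ≥ l ^ p - C * l ^ (p - 1) * f + C * F` for every `l ≥ f`. Taking for `E` a
superlevel set of `M_N φ` of measure `κ`, at level `l`, bounds the supremum below by this quantity
minus `(1 - κ) * l ^ p`, and Young's inequality with `(p - 1) / p * C ≤ κ` shows that `l = f` is the
worst case.

Equality holds for normalised indicators of leftmost intervals of `[0, 1)`, whose averages jump by
exactly `N` until they vanish or become constant. Copies of such a spike on the maximal `N`-adic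
subintervals of `[0, u)`, and the value `1` elsewhere, interpolate linearly in `u` between the
values of `∫ φ ^ p`, hence reach every `F ≥ f ^ p`. -/

local notation "𝕀" => Ico (0 : ℝ) 1

section ScalarInequalities

variable {p : ℝ}

lemma rpow_sub_one_mul_self {x : ℝ} (hx : 0 ≤ x) (hp : 0 < p) : x ^ (p - 1) * x = x ^ p := by
  rw [← Real.rpow_add_one' hx (by linarith), sub_add_cancel]

lemma rpow_sub_one_mul_le {l y : ℝ} (hp : 1 < p) (hl : 0 ≤ l) (hy : 0 ≤ y) :
    l ^ (p - 1) * y ≤ (p - 1) / p * l ^ p + y ^ p / p := by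
  have hpq : (p / (p - 1)).HolderConjugate p := (Real.HolderConjugate.conjExponent hp).symm
  have hexp : (p - 1) * (p / (p - 1)) = p := mul_div_cancel₀ p (by linarith)
  have young := Real.young_inequality_of_nonneg (Real.rpow_nonneg hl (p - 1)) hy hpq
  rw [← Real.rpow_mul hl, hexp, div_div_eq_mul_div, mul_div_assoc] at young
  linarith

/-- The constant `(R ^ p - 1) / (R ^ p - R)` for which `x ↦ 1 - C * x` and `x ↦ (1 - C) * x ^ p`
agree at `x = 1` and `x = R`. -/
noncomputable def jumpConst (R p : ℝ) : ℝ := (R ^ p - 1) / (R ^ p - R)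

lemma rpow_sub_self_pos {R : ℝ} (hR : 1 < R) (hp : 1 < p) : 0 < R ^ p - R :=
  sub_pos.2 (Real.self_lt_rpow_of_one_lt hR hp)

lemma one_le_jumpConst {R : ℝ} (hR : 1 < R) (hp : 1 < p) : 1 ≤ jumpConst R p := by
  rw [jumpConst, one_le_div (rpow_sub_self_pos hR hp)]
  linarith

lemma rpow_le_chord {R t : ℝ} (hp : 1 ≤ p) (hR : 1 < R) (h1 : 1 ≤ t) (htR : t ≤ R) :
    (R - 1) * t ^ p ≤ (R - t) + (t - 1) * R ^ p := by
  have hR1 : 0 < R - 1 := sub_pos.2 hR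
  have chord := (convexOn_rpow hp).2 (mem_Ici.2 zero_le_one)
    (mem_Ici.2 (zero_le_one.trans hR.le))
    (div_nonneg (sub_nonneg.2 htR) hR1.le) (div_nonneg (sub_nonneg.2 h1) hR1.le)
    (by field_simp; ring)
  have ht : (R - t) / (R - 1) * 1 + (t - 1) / (R - 1) * R = t := by
    field_simp
    ring
  have hsum : (R - t) / (R - 1) + (t - 1) / (R - 1) * R ^ p
      = ((R - t) + (t - 1) * R ^ p) / (R - 1) := by ring
  simp only [smul_eq_mul, Real.one_rpow, mul_one] at chord ht
  rwa [ht, hsum, le_div_iff₀' hR1] at chord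

lemma one_sub_jumpConst_mul_le {R t : ℝ} (hp : 1 < p) (hR : 1 < R) (h1 : 1 ≤ t) (htR : t ≤ R) :
    1 - jumpConst R p * t ≤ (1 - jumpConst R p) * t ^ p := by
  have hpos := rpow_sub_self_pos hR hp
  have chord := rpow_le_chord hp.le hR h1 htR
  have key : (1 - jumpConst R p) * t ^ p - (1 - jumpConst R p * t)
      = ((R - t) + (t - 1) * R ^ p - (R - 1) * t ^ p) / (R ^ p - R) := by
    rw [jumpConst]
    field_simp
    ring
  have := div_nonneg (sub_nonneg.2 chord) hpos.le
  linarith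

lemma rpow_sub_jumpConst_mul_le {R l y : ℝ} (hp : 1 < p) (hR : 1 < R) (hl : 0 < l) (hly : l ≤ y)
    (hyR : y ≤ R * l) :
    l ^ p - jumpConst R p * l ^ (p - 1) * y ≤ y ^ p - jumpConst R p * y ^ (p - 1) * y := by
  have hy : 0 < y := hl.trans_le hly
  have scaled := mul_le_mul_of_nonneg_left
    (one_sub_jumpConst_mul_le hp hR ((one_le_div hl).2 hly) ((div_le_iff₀ hl).2 hyR))
    (Real.rpow_nonneg hl.le p)
  have hlp : l ^ p * (y / l) = l ^ (p - 1) * y := by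
    rw [← rpow_sub_one_mul_self hl.le (by linarith)]
    field_simp
  have hyp : l ^ p * (y / l) ^ p = y ^ p := by
    rw [← Real.mul_rpow hl.le (by positivity), mul_div_cancel₀ _ hl.ne']
  have hself := rpow_sub_one_mul_self hy.le (zero_lt_one.trans hp)
  calc l ^ p - jumpConst R p * l ^ (p - 1) * y
      = l ^ p * (1 - jumpConst R p * (y / l)) := by rw [mul_assoc, ← hlp]; ring
    _ ≤ l ^ p * ((1 - jumpConst R p) * (y / l) ^ p) := scaled
    _ = y ^ p - jumpConst R p * y ^ (p - 1) * y := by rw [mul_assoc, hself, ← hyp]; ring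

lemma neg_rpow_add_rpow_sub_one_mul_le {l y : ℝ} (hp : 1 < p) (hl : 0 ≤ l) (hy : 0 ≤ y) :
    -l ^ p + p / (p - 1) * l ^ (p - 1) * y ≤ -y ^ p + p / (p - 1) * y ^ (p - 1) * y := by
  have hp1 : 0 < p - 1 := sub_pos.2 hp
  have hself := rpow_sub_one_mul_self hy (zero_lt_one.trans hp)
  have young := mul_le_mul_of_nonneg_left (rpow_sub_one_mul_le hp hl hy)
    (by positivity : 0 ≤ p / (p - 1))
  have expand : p / (p - 1) * ((p - 1) / p * l ^ p + y ^ p / p)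
      = l ^ p + (p / (p - 1) - 1) * y ^ p := by
    field_simp
    ring
  rw [mul_assoc, mul_assoc, hself]
  linarith

lemma conjExponent_mul_rpow_sub_one_mul_le {l y : ℝ} (hp : 1 < p) (hl : 0 ≤ l) (hy : 0 ≤ y) :
    p / (p - 1) * l ^ (p - 1) * y ≤ l ^ p / 2 + 2 ^ (p - 1) / (p - 1) * y ^ p := by
  have hp1 : 0 < p - 1 := sub_pos.2 hp
  have young := mul_le_mul_of_nonneg_left (rpow_sub_one_mul_le hp hl (by positivity : 0 ≤ 2 * y))
    (by positivity : 0 ≤ p / (2 * (p - 1)))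
  have h2 : (2 * y) ^ p = 2 * 2 ^ (p - 1) * y ^ p := by
    rw [Real.mul_rpow two_pos.le hy, ← rpow_sub_one_mul_self two_pos.le (zero_lt_one.trans hp)]
    ring
  rw [h2] at young
  have expand : p / (2 * (p - 1)) * ((p - 1) / p * l ^ p + 2 * 2 ^ (p - 1) * y ^ p / p)
      = l ^ p / 2 + 2 ^ (p - 1) / (p - 1) * y ^ p := by field_simp
  have lhs : p / (2 * (p - 1)) * (l ^ (p - 1) * (2 * y)) = p / (p - 1) * l ^ (p - 1) * y := by
    field_simp
  rwa [expand, lhs] at young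

lemma sub_rpow_le_sub_rpow_sub_one_mul {C κ f l : ℝ} (hp : 1 < p) (hC : 0 ≤ C)
    (hκ : (p - 1) / p * C ≤ κ) (hf : 0 ≤ f) (hfl : f ≤ l) :
    κ * f ^ p - C * f ^ p ≤ κ * l ^ p - C * l ^ (p - 1) * f := by
  have hp0 : 0 < p := zero_lt_one.trans hp
  have young := mul_le_mul_of_nonneg_left (rpow_sub_one_mul_le hp (hf.trans hfl) hf) hC
  have mono := mul_le_mul_of_nonneg_left (Real.rpow_le_rpow hf hfl hp0.le) (sub_nonneg.2 hκ)
  have expand : C * ((p - 1) / p * l ^ p + f ^ p / p)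
      = (p - 1) / p * C * l ^ p + (C - (p - 1) / p * C) * f ^ p := by
    field_simp
    ring
  linarith

end ScalarInequalities

section Branch

/-- The `i`-th inverse branch `x ↦ (i + x) / N` of the expanding map `x ↦ fract (N * x)`. -/
noncomputable def branch (N i : ℕ) (x : ℝ) : ℝ := (i + x) / N

lemma branch_one (N i : ℕ) : branch N i 1 = branch N (i + 1) 0 := by
  simp [branch]

variable {N : ℕ} [NeZero N]

lemma branch_strictMono (i : ℕ) : StrictMono (branch N i) := fun _ _ hxy =>
  div_lt_div_of_pos_right (add_lt_add_right hxy _) (Nat.cast_pos.2 (NeZero.pos N))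

lemma branch_mem_Ico {i : ℕ} (hi : i < N) {x : ℝ} (hx : x ∈ 𝕀) : branch N i x ∈ 𝕀 := by
  have hN : (0 : ℝ) < N := Nat.cast_pos.2 (NeZero.pos N)
  have hiN : (i : ℝ) + 1 ≤ N := mod_cast hi
  refine ⟨div_nonneg (add_nonneg i.cast_nonneg hx.1) hN.le, ?_⟩
  rw [branch, div_lt_one hN]
  linarith [hx.2]

lemma mul_branch (i : ℕ) (x : ℝ) : N * branch N i x = i + x :=
  mul_div_cancel₀ _ (Nat.cast_ne_zero.2 (NeZero.ne N))

lemma floor_mul_branch (i : ℕ) {x : ℝ} (hx : x ∈ 𝕀) : ⌊N * branch N i x⌋₊ = i := by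
  rw [mul_branch, add_comm, Nat.floor_add_natCast hx.1, Nat.floor_eq_zero.2 hx.2, zero_add]

lemma fract_mul_branch (i : ℕ) {x : ℝ} (hx : x ∈ 𝕀) : Int.fract (N * branch N i x) = x := by
  rw [mul_branch, Int.fract_natCast_add, Int.fract_eq_self.2 hx]

lemma setIntegral_comp_branch (g : ℝ → ℝ) (i : ℕ) {a b : ℝ} (hab : a ≤ b) :
    ∫ x in Ico a b, g (branch N i x) = N * ∫ x in Ico (branch N i a) (branch N i b), g x := by
  rw [integral_Ico_eq_integral_Ioc, integral_Ico_eq_integral_Ioc,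
    ← intervalIntegral.integral_of_le hab,
    ← intervalIntegral.integral_of_le ((branch_strictMono i).monotone hab)]
  simp only [branch, add_div]
  exact intervalIntegral.integral_comp_add_div g (Nat.cast_ne_zero.2 (NeZero.ne N)) _

lemma Ico_branch_subset {i : ℕ} (hi : i < N) : Ico (branch N i 0) (branch N i 1) ⊆ 𝕀 := by
  have hN : (0 : ℝ) < N := Nat.cast_pos.2 (NeZero.pos N)
  have hiN : (i : ℝ) + 1 ≤ N := mod_cast hi
  exact Ico_subset_Ico (by unfold branch; positivity) ((div_le_one hN).2 hiN)

lemma integrableOn_comp_branch {g : ℝ → ℝ} (hg : IntegrableOn g 𝕀) {i : ℕ} (hi : i < N) :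
    IntegrableOn (g ∘ branch N i) 𝕀 := by
  have hN : (N : ℝ) ≠ 0 := Nat.cast_ne_zero.2 (NeZero.ne N)
  have hle : branch N i 0 ≤ branch N i 1 := (branch_strictMono i).monotone zero_le_one
  have hbranch := (intervalIntegrable_iff_integrableOn_Ico_of_le hle).2
    (hg.mono_set (Ico_branch_subset hi))
  have hcomp := (hbranch.comp_add_left (i / N : ℝ)).comp_mul_left (c := (N : ℝ)⁻¹)
  rw [← intervalIntegrable_iff_integrableOn_Ico_of_le zero_le_one]
  convert hcomp using 1
  · ext x
    simp only [Function.comp, branch, add_div, inv_mul_eq_div]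
  · simp [branch]
  · simp only [branch]
    field_simp
    ring

lemma setIntegral_eq_sum_branch {g : ℝ → ℝ} (hg : IntegrableOn g 𝕀) :
    ∫ x in 𝕀, g x = (∑ i ∈ Finset.range N, ∫ x in 𝕀, g (branch N i x)) / N := by
  have hN : (N : ℝ) ≠ 0 := Nat.cast_ne_zero.2 (NeZero.ne N)
  have hle (i : ℕ) : branch N i 0 ≤ branch N (i + 1) 0 :=
    branch_one N i ▸ (branch_strictMono i).monotone zero_le_one
  have piece (i : ℕ) : ∫ x in 𝕀, g (branch N i x)
      = N * ∫ x in (branch N i 0)..(branch N (i + 1) 0), g x := by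
    rw [setIntegral_comp_branch g i zero_le_one, branch_one, integral_Ico_eq_integral_Ioc,
      intervalIntegral.integral_of_le (hle i)]
  have hint (i : ℕ) (hi : i < N) :
      IntervalIntegrable g volume (branch N i 0) (branch N (i + 1) 0) := by
    rw [intervalIntegrable_iff_integrableOn_Ico_of_le (hle i), ← branch_one]
    exact hg.mono_set (Ico_branch_subset hi)
  simp only [piece, ← Finset.mul_sum, mul_div_cancel_left₀ _ hN]
  rw [intervalIntegral.sum_integral_adjacent_intervals (a := fun i => branch N i 0) hint,
    integral_Ico_eq_integral_Ioc, ← intervalIntegral.integral_of_le zero_le_one]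
  simp [branch, hN]

end Branch

section LevelAverages

variable {N : ℕ} {φ : ℝ → ℝ} {m i : ℕ} {x : ℝ}

/-- The average of `|φ|` over the `N`-adic interval of level `m` containing `x`. -/
noncomputable def levelAvg (N : ℕ) (φ : ℝ → ℝ) (m : ℕ) (x : ℝ) : ℝ :=
  adicAvg N φ m ⌊(N : ℝ) ^ m * x⌋₊

lemma measurable_levelAvg (N : ℕ) (φ : ℝ → ℝ) (m : ℕ) : Measurable (levelAvg N φ m) :=
  (Measurable.of_discrete (f := adicAvg N φ m)).comp
    (Nat.measurable_floor.comp (measurable_const_mul _))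

lemma levelAvg_zero (hx : x ∈ 𝕀) : levelAvg N φ 0 x = ∫ y in 𝕀, |φ y| := by
  simp [levelAvg, adicAvg, adicItv, Nat.floor_eq_zero.2 hx.2]

variable [NeZero N]

lemma natCast_pow_pos (m : ℕ) : (0 : ℝ) < (N : ℝ) ^ m :=
  pow_pos (Nat.cast_pos.2 (NeZero.pos N)) m

lemma mem_adicItv_iff {k : ℕ} (hx : 0 ≤ x) :
    x ∈ adicItv N m k ↔ ⌊(N : ℝ) ^ m * x⌋₊ = k := by
  have hNm : (0 : ℝ) < (N : ℝ) ^ m := natCast_pow_pos m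
  rw [Nat.floor_eq_iff (by positivity), adicItv, mem_Ico, div_le_iff₀ hNm, lt_div_iff₀ hNm,
    mul_comm x]

lemma floor_pow_mul_lt (m : ℕ) (hx : x ∈ 𝕀) : ⌊(N : ℝ) ^ m * x⌋₊ < N ^ m := by
  have hNm : (0 : ℝ) < (N : ℝ) ^ m := natCast_pow_pos m
  rw [Nat.floor_lt (mul_nonneg hNm.le hx.1), Nat.cast_pow]
  exact mul_lt_of_lt_one_right hNm hx.2

lemma adicItv_subset {k : ℕ} (hk : k < N ^ m) : adicItv N m k ⊆ 𝕀 := by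
  have hk' : (k : ℝ) + 1 ≤ (N : ℝ) ^ m := mod_cast hk
  exact Ico_subset_Ico (by positivity) ((div_le_one (natCast_pow_pos m)).2 hk')

lemma levelAvg_le (hφ : IntegrableOn φ 𝕀) (m : ℕ) (hx : x ∈ 𝕀) :
    levelAvg N φ m x ≤ (N : ℝ) ^ m * ∫ y in 𝕀, |φ y| :=
  mul_le_mul_of_nonneg_left
    (setIntegral_mono_set hφ.abs (Eventually.of_forall fun _ => abs_nonneg _)
      (adicItv_subset (floor_pow_mul_lt m hx)).eventuallyLE) (natCast_pow_pos m).le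

lemma levelAvg_le_of_abs_le {B : ℝ} (hB : ∀ y ∈ 𝕀, |φ y| ≤ B) (m : ℕ) (hx : x ∈ 𝕀) :
    levelAvg N φ m x ≤ B := by
  have hNm : (0 : ℝ) < (N : ℝ) ^ m := natCast_pow_pos m
  set k := ⌊(N : ℝ) ^ m * x⌋₊
  have hvol : volume.real (adicItv N m k) = ((N : ℝ) ^ m)⁻¹ := by
    rw [adicItv, Real.volume_real_Ico_of_le (by gcongr; simp)]
    field_simp
    ring
  have hint : ∫ y in adicItv N m k, |φ y| ≤ B * volume.real (adicItv N m k) := by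
    refine (Real.le_norm_self _).trans
      (norm_setIntegral_le_of_norm_le_const measure_Ico_lt_top fun y hy => ?_)
    rw [Real.norm_eq_abs, abs_abs]
    exact hB y (adicItv_subset (floor_pow_mul_lt m hx) hy)
  calc levelAvg N φ m x = (N : ℝ) ^ m * ∫ y in adicItv N m k, |φ y| := rfl
    _ ≤ (N : ℝ) ^ m * (B * ((N : ℝ) ^ m)⁻¹) := by rw [← hvol]; gcongr
    _ = B := by field_simp

lemma levelAvg_succ_branch (hx : x ∈ 𝕀) :
    levelAvg N φ (m + 1) (branch N i x) = levelAvg N (φ ∘ branch N i) m x := by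
  have hN : (N : ℝ) ≠ 0 := Nat.cast_ne_zero.2 (NeZero.ne N)
  set k := ⌊(N : ℝ) ^ m * x⌋₊ with hk
  have hfloor : ⌊(N : ℝ) ^ (m + 1) * branch N i x⌋₊ = N ^ m * i + k := by
    have : (N : ℝ) ^ (m + 1) * branch N i x = (N : ℝ) ^ m * x + (N ^ m * i : ℕ) := by
      rw [pow_succ, mul_assoc, mul_branch]
      push_cast
      ring
    rw [this, Nat.floor_add_natCast (mul_nonneg (natCast_pow_pos m).le hx.1), add_comm]
  have hitv : adicItv N (m + 1) (N ^ m * i + k)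
      = Ico (branch N i (k / (N : ℝ) ^ m)) (branch N i ((k + 1) / (N : ℝ) ^ m)) := by
    simp only [adicItv, branch]
    congr 1 <;> push_cast <;> field_simp <;> ring
  have hsubst := setIntegral_comp_branch (N := N) (fun y => |φ y|) i
    (by gcongr; simp : (k : ℝ) / (N : ℝ) ^ m ≤ (k + 1) / (N : ℝ) ^ m)
  rw [← hitv] at hsubst
  simp only [levelAvg, adicAvg, ← hk, hfloor]
  rw [pow_succ, mul_assoc, ← hsubst]
  rfl

lemma ae_tendsto_levelAvg (hN : 1 < N) (hφ : IntegrableOn φ 𝕀) :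
    ∀ᵐ x ∂volume.restrict 𝕀, Tendsto (fun m => levelAvg N φ m x) atTop (nhds |φ x|) := by
  set g : ℝ → ℝ := Set.indicator 𝕀 fun x => |φ x| with hg
  have hgint : Integrable g := (integrable_indicator_iff measurableSet_Ico).2 hφ.abs
  rw [ae_restrict_iff' measurableSet_Ico]
  filter_upwards [IsUnifLocDoublingMeasure.ae_tendsto_average volume hgint.locallyIntegrable 1]
    with x hx hxI
  set k : ℕ → ℕ := fun m => ⌊(N : ℝ) ^ m * x⌋₊
  set c : ℕ → ℝ := fun m => (k m + 1 / 2) / (N : ℝ) ^ m with hc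
  set r : ℕ → ℝ := fun m => 1 / 2 / (N : ℝ) ^ m with hr
  have hball (m : ℕ) :
      Metric.closedBall (c m) (r m) = Icc (k m / (N : ℝ) ^ m) ((k m + 1) / (N : ℝ) ^ m) := by
    rw [Real.closedBall_eq_Icc]
    congr 1 <;> simp only [hc, hr] <;> ring
  have hradius : Tendsto r atTop (nhdsWithin 0 (Ioi 0)) := by
    refine tendsto_nhdsWithin_iff.2 ⟨tendsto_const_nhds.div_atTop
      (tendsto_pow_atTop_atTop_of_one_lt (mod_cast hN)), Eventually.of_forall fun m => ?_⟩
    have := natCast_pow_pos (N := N) m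
    simp only [hr, mem_Ioi]
    positivity
  have hmem (m : ℕ) : x ∈ Metric.closedBall (c m) (1 * r m) := by
    rw [one_mul, hball]
    exact Ico_subset_Icc_self ((mem_adicItv_iff hxI.1).2 rfl)
  have hlim := hx c r hradius (Eventually.of_forall hmem)
  rw [hg, indicator_of_mem hxI] at hlim
  refine hlim.congr fun m => ?_
  have hvol : volume.real (Icc (k m / (N : ℝ) ^ m) ((k m + 1) / (N : ℝ) ^ m))
      = ((N : ℝ) ^ m)⁻¹ := by
    rw [Real.volume_real_Icc_of_le (by gcongr; simp)]
    have := natCast_pow_pos (N := N) m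
    field_simp
    ring
  rw [hball, setAverage_eq, hvol, inv_inv, smul_eq_mul, integral_Icc_eq_integral_Ioc,
    ← integral_Ico_eq_integral_Ioc]
  refine congrArg _ (setIntegral_congr_fun measurableSet_Ico fun y hy => ?_)
  exact indicator_of_mem (adicItv_subset (floor_pow_mul_lt m hxI) hy) _

end LevelAverages

section AdicMax

variable {N : ℕ} {φ ψ : ℝ → ℝ} {x : ℝ}

lemma adicMax_nonneg (N : ℕ) (φ : ℝ → ℝ) (x : ℝ) : 0 ≤ adicMax N φ x := by
  refine Real.sSup_nonneg ?_
  rintro _ ⟨m, k, -, -, rfl⟩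
  exact mul_nonneg (by positivity) (integral_nonneg fun _ => abs_nonneg _)

lemma adicMax_const_mul {c : ℝ} (hc : 0 ≤ c) (φ : ℝ → ℝ) (x : ℝ) :
    adicMax N (fun y => c * φ y) x = c * adicMax N φ x := by
  have havg (m k : ℕ) : adicAvg N (fun y => c * φ y) m k = c * adicAvg N φ m k := by
    simp only [adicAvg, abs_mul, abs_of_nonneg hc, integral_const_mul]
    ring
  rw [← smul_eq_mul, adicMax, adicMax, ← Real.sSup_smul_of_nonneg hc]
  congr 1
  ext r
  simp only [havg, mem_ofPred_eq, mem_smul_set, smul_eq_mul]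
  constructor
  · rintro ⟨m, k, hk, hx, rfl⟩
    exact ⟨_, ⟨m, k, hk, hx, rfl⟩, rfl⟩
  · rintro ⟨_, ⟨m, k, hk, hx, rfl⟩, rfl⟩
    exact ⟨m, k, hk, hx, rfl⟩

variable [NeZero N]

lemma adicMax_congr (h : EqOn φ ψ 𝕀) : adicMax N φ = adicMax N ψ := by
  have havg {m k : ℕ} (hk : k < N ^ m) : adicAvg N φ m k = adicAvg N ψ m k :=
    congrArg _ (setIntegral_congr_fun measurableSet_Ico fun y hy =>
      congrArg _ (h (adicItv_subset hk hy)))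
  ext x
  refine congrArg sSup (Set.ext fun r => ?_)
  simp only [mem_ofPred_eq]
  refine exists₂_congr fun m k => and_congr_right fun hk => ?_
  rw [havg hk]

lemma adicMax_eq_iSup (hx : x ∈ 𝕀) : adicMax N φ x = ⨆ m, levelAvg N φ m x := by
  refine congrArg sSup (Set.ext fun r => ⟨?_, ?_⟩)
  · rintro ⟨m, k, -, hxk, rfl⟩
    exact ⟨m, congrArg _ ((mem_adicItv_iff hx.1).1 hxk)⟩
  · rintro ⟨m, rfl⟩
    exact ⟨m, _, floor_pow_mul_lt m hx, (mem_adicItv_iff hx.1).2 rfl, rfl⟩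

lemma adicMax_eq_indicator : adicMax N φ = Set.indicator 𝕀 fun x => ⨆ m, levelAvg N φ m x := by
  ext x
  by_cases hx : x ∈ 𝕀
  · rw [indicator_of_mem hx, adicMax_eq_iSup hx]
  · rw [indicator_of_notMem hx, ← Real.sSup_empty]
    refine congrArg sSup (eq_empty_of_forall_notMem ?_)
    rintro r ⟨m, k, hk, hxk, -⟩
    exact hx (adicItv_subset hk hxk)

lemma measurable_adicMax (φ : ℝ → ℝ) : Measurable (adicMax N φ) := by
  rw [adicMax_eq_indicator]
  exact (Measurable.iSup fun m => measurable_levelAvg N φ m).indicator measurableSet_Ico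

lemma bddAbove_levelAvg {B : ℝ} (hB : ∀ y ∈ 𝕀, |φ y| ≤ B) (hx : x ∈ 𝕀) :
    BddAbove (range fun m => levelAvg N φ m x) :=
  ⟨B, forall_mem_range.2 fun m => levelAvg_le_of_abs_le hB m hx⟩

lemma integral_abs_le_adicMax (hbdd : BddAbove (range fun m => levelAvg N φ m x)) (hx : x ∈ 𝕀) :
    ∫ y in 𝕀, |φ y| ≤ adicMax N φ x := by
  rw [adicMax_eq_iSup hx, ← levelAvg_zero hx]
  exact le_ciSup hbdd 0

lemma adicMax_le {B : ℝ} (hB : ∀ y ∈ 𝕀, |φ y| ≤ B) (hx : x ∈ 𝕀) : adicMax N φ x ≤ B := by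
  rw [adicMax_eq_iSup hx]
  exact ciSup_le fun m => levelAvg_le_of_abs_le hB m hx

lemma adicMax_branch {i : ℕ} (hi : i < N) {B : ℝ} (hB : ∀ y ∈ 𝕀, |φ y| ≤ B) (hx : x ∈ 𝕀) :
    adicMax N φ (branch N i x) = max (∫ y in 𝕀, |φ y|) (adicMax N (φ ∘ branch N i) x) := by
  have hbx := branch_mem_Ico hi hx
  have hbdd := bddAbove_levelAvg (N := N) hB hbx
  have hbdd' := bddAbove_levelAvg (N := N) (φ := φ ∘ branch N i)
    (fun y hy => hB _ (branch_mem_Ico hi hy)) hx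
  rw [adicMax_eq_iSup hbx, adicMax_eq_iSup hx]
  refine le_antisymm (ciSup_le fun m => ?_) (max_le ?_ (ciSup_le fun m => ?_))
  · rcases m with _ | m
    · exact (levelAvg_zero hbx).le.trans (le_max_left _ _)
    · exact (levelAvg_succ_branch hx).le.trans ((le_ciSup hbdd' m).trans (le_max_right _ _))
  · exact (levelAvg_zero hbx).ge.trans (le_ciSup hbdd 0)
  · exact (levelAvg_succ_branch hx).ge.trans (le_ciSup hbdd (m + 1))

lemma adicMax_const {c : ℝ} (hc : 0 ≤ c) (hx : x ∈ 𝕀) : adicMax N (fun _ => c) x = c := by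
  have hB : ∀ y ∈ 𝕀, |(fun _ => c) y| ≤ c := fun y _ => (abs_of_nonneg hc).le
  refine le_antisymm (adicMax_le hB hx) ?_
  simpa [abs_of_nonneg hc] using
    integral_abs_le_adicMax (bddAbove_levelAvg (N := N) hB hx) hx

end AdicMax

section TruncatedMax

variable {N : ℕ} {φ : ℝ → ℝ} {l x : ℝ} {m i : ℕ}

/-- The maximum of `l` and the averages of `|φ|` over the `N`-adic intervals containing `x` of
level less than `m`; the Bellman induction runs over `m` and varies the starting value `l`. -/
noncomputable def truncMax (N : ℕ) (l : ℝ) (φ : ℝ → ℝ) : ℕ → ℝ → ℝ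
  | 0, _ => l
  | m + 1, x => max (truncMax N l φ m x) (levelAvg N φ m x)

lemma measurable_truncMax (N : ℕ) (l : ℝ) (φ : ℝ → ℝ) (m : ℕ) :
    Measurable (truncMax N l φ m) := by
  induction m with
  | zero => exact measurable_const
  | succ m ih => exact ih.max (measurable_levelAvg N φ m)

lemma le_truncMax (N : ℕ) (l : ℝ) (φ : ℝ → ℝ) (m : ℕ) (x : ℝ) : l ≤ truncMax N l φ m x := by
  induction m with
  | zero => exact le_rfl
  | succ m ih => exact ih.trans (le_max_left _ _)

lemma monotone_truncMax (N : ℕ) (l : ℝ) (φ : ℝ → ℝ) (x : ℝ) :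
    Monotone fun m => truncMax N l φ m x :=
  monotone_nat_of_le_succ fun _ => le_max_left _ _

lemma levelAvg_le_truncMax (N : ℕ) (l : ℝ) (φ : ℝ → ℝ) (m : ℕ) (x : ℝ) :
    levelAvg N φ m x ≤ truncMax N l φ (m + 1) x :=
  le_max_right _ _

lemma truncMax_le {B : ℝ} (hl : l ≤ B) (h : ∀ j < m, levelAvg N φ j x ≤ B) :
    truncMax N l φ m x ≤ B := by
  induction m with
  | zero => exact hl
  | succ m ih => exact max_le (ih fun j hj => h j (hj.trans m.lt_succ_self)) (h m m.lt_succ_self)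

variable [NeZero N]

lemma exists_truncMax_le (hφ : IntegrableOn φ 𝕀) (l : ℝ) (m : ℕ) :
    ∃ B, ∀ x ∈ 𝕀, truncMax N l φ m x ≤ B := by
  refine ⟨max l ((N : ℝ) ^ m * ∫ y in 𝕀, |φ y|), fun x hx =>
    truncMax_le (le_max_left _ _) fun j hj => (levelAvg_le hφ j hx).trans (le_max_of_le_right ?_)⟩
  have hN : (1 : ℝ) ≤ N := mod_cast NeZero.one_le
  have : 0 ≤ ∫ y in 𝕀, |φ y| := integral_nonneg fun _ => abs_nonneg _
  gcongr

lemma truncMax_succ_branch (l : ℝ) (φ : ℝ → ℝ) (m : ℕ) (hi : i < N) (hx : x ∈ 𝕀) :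
    truncMax N l φ (m + 1) (branch N i x)
      = truncMax N (max l (∫ y in 𝕀, |φ y|)) (φ ∘ branch N i) m x := by
  induction m with
  | zero => exact congrArg _ (levelAvg_zero (branch_mem_Ico hi hx))
  | succ m ih => rw [truncMax, ih, levelAvg_succ_branch hx, truncMax]

variable {a b : ℝ → ℝ}

lemma exists_abs_comp_truncMax_le (ha : Continuous a) (hφ : IntegrableOn φ 𝕀) (l : ℝ) (m : ℕ) :
    ∃ C, ∀ x ∈ 𝕀, |a (truncMax N l φ m x)| ≤ C := by
  obtain ⟨B, hB⟩ := exists_truncMax_le (N := N) hφ l m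
  obtain ⟨C, hC⟩ := isCompact_Icc.exists_bound_of_continuousOn ha.continuousOn
  exact ⟨C, fun x hx => hC _ ⟨le_truncMax N l φ m x, hB x hx⟩⟩

lemma integrableOn_comp_truncMax (ha : Continuous a) (hφ : IntegrableOn φ 𝕀) (l : ℝ) (m : ℕ) :
    IntegrableOn (fun x => a (truncMax N l φ m x)) 𝕀 := by
  obtain ⟨C, hC⟩ := exists_abs_comp_truncMax_le (N := N) ha hφ l m
  exact Measure.integrableOn_of_bounded measure_Ico_lt_top.ne
    (ha.measurable.comp (measurable_truncMax N l φ m)).aestronglyMeasurable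
    (ae_restrict_of_forall_mem measurableSet_Ico hC)

lemma integrableOn_comp_truncMax_mul_abs (hb : Continuous b) (hφ : IntegrableOn φ 𝕀) (l : ℝ)
    (m : ℕ) : IntegrableOn (fun x => b (truncMax N l φ m x) * |φ x|) 𝕀 := by
  obtain ⟨C, hC⟩ := exists_abs_comp_truncMax_le (N := N) hb hφ l m
  exact hφ.abs.bdd_mul
    (hb.measurable.comp (measurable_truncMax N l φ m)).aestronglyMeasurable
    (ae_restrict_of_forall_mem measurableSet_Ico hC)

lemma integral_abs_branch_le (hφ : IntegrableOn φ 𝕀) (hi : i < N) :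
    ∫ y in 𝕀, |φ (branch N i y)| ≤ N * ∫ y in 𝕀, |φ y| := by
  rw [setIntegral_eq_sum_branch (N := N) hφ.abs,
    mul_div_cancel₀ _ (Nat.cast_ne_zero.2 (NeZero.ne N))]
  exact Finset.single_le_sum (f := fun i => ∫ y in 𝕀, |φ (branch N i y)|)
    (fun j _ => integral_nonneg fun _ => abs_nonneg _) (Finset.mem_range.2 hi)

/- The averages of `|φ|` along nested `N`-adic intervals grow at most by the factor `N`, so it
suffices to control the jumps of `M ↦ a M + b M * y` from `l` to a value `y ≤ N * l`. -/
theorem add_mul_integral_abs_le_integral_truncMax (ha : Continuous a) (hb : Continuous b)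
    (step : ∀ l y : ℝ, 0 < l → l ≤ y → y ≤ N * l → a l + b l * y ≤ a y + b y * y)
    (hl : 0 < l) (hφ : IntegrableOn φ 𝕀) (hφl : ∫ y in 𝕀, |φ y| ≤ N * l) (m : ℕ) :
    a l + b l * ∫ y in 𝕀, |φ y|
      ≤ ∫ x in 𝕀, (a (truncMax N l φ m x) + b (truncMax N l φ m x) * |φ x|) := by
  induction m generalizing φ l with
  | zero =>
    simp only [truncMax]
    rw [integral_add (integrable_const _) (hφ.abs.const_mul _), integral_const_mul]
    simp
  | succ m ih =>
    set f := ∫ y in 𝕀, |φ y| with hf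
    set f' : ℕ → ℝ := fun i => ∫ y in 𝕀, |φ (branch N i y)|
    set l' := max l f with hl'
    have hN : (0 : ℝ) < N := Nat.cast_pos.2 (NeZero.pos N)
    have hmean : f = (∑ i ∈ Finset.range N, f' i) / N := setIntegral_eq_sum_branch hφ.abs
    have jump : a l + b l * f ≤ a l' + b l' * f := by
      rcases le_total f l with h | h
      · rw [hl', max_eq_left h]
      · rw [hl', max_eq_right h]
        exact step l f hl h hφl
    have child (i : ℕ) (hi : i ∈ Finset.range N) : a l' + b l' * f' i
        ≤ ∫ x in 𝕀, (a (truncMax N l φ (m + 1) (branch N i x))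
          + b (truncMax N l φ (m + 1) (branch N i x)) * |φ (branch N i x)|) := by
      rw [Finset.mem_range] at hi
      have hgrow : f' i ≤ N * l' :=
        (integral_abs_branch_le hφ hi).trans (by gcongr; exact le_max_right l f)
      refine (ih (lt_max_of_lt_left hl) (integrableOn_comp_branch hφ hi) hgrow).trans_eq
        (setIntegral_congr_fun measurableSet_Ico fun x hx => ?_)
      simp only [truncMax_succ_branch l φ m hi hx, Function.comp, hf]
    have hint : IntegrableOn
        (fun x => a (truncMax N l φ (m + 1) x) + b (truncMax N l φ (m + 1) x) * |φ x|) 𝕀 :=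
      (integrableOn_comp_truncMax ha hφ l (m + 1)).add
        (integrableOn_comp_truncMax_mul_abs hb hφ l (m + 1))
    rw [setIntegral_eq_sum_branch (N := N) hint, le_div_iff₀ hN]
    calc (a l + b l * f) * N ≤ (a l' + b l' * f) * N := by gcongr
      _ = ∑ i ∈ Finset.range N, (a l' + b l' * f' i) := by
        rw [Finset.sum_add_distrib, ← Finset.mul_sum, Finset.sum_const, Finset.card_range, hmean]
        simp only [nsmul_eq_mul]
        field_simp
      _ ≤ _ := Finset.sum_le_sum child

end TruncatedMax

section LowerBound

variable {N : ℕ} [NeZero N] {φ : ℝ → ℝ} {p l x : ℝ} {m : ℕ}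

lemma tendsto_truncMax (hbdd : BddAbove (range fun m => levelAvg N φ m x)) (hx : x ∈ 𝕀) (l : ℝ) :
    Tendsto (fun m => truncMax N l φ m x) atTop (nhds (max l (adicMax N φ x))) := by
  rw [adicMax_eq_iSup hx]
  refine tendsto_atTop_isLUB (monotone_truncMax N l φ x) ⟨?_, fun B hB => ?_⟩
  · exact forall_mem_range.2 fun m => truncMax_le (le_max_left _ _) fun j _ =>
      le_max_of_le_right (le_ciSup hbdd j)
  · exact max_le (hB ⟨0, rfl⟩) (ciSup_le fun m =>
      (levelAvg_le_truncMax N l φ m x).trans (hB ⟨m + 1, rfl⟩))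

lemma ae_tendsto_truncMax (hN : 1 < N) (hφ : IntegrableOn φ 𝕀) (l : ℝ) :
    ∀ᵐ x ∂volume.restrict 𝕀,
      Tendsto (fun m => truncMax N l φ m x) atTop (nhds (max l (adicMax N φ x))) := by
  filter_upwards [ae_tendsto_levelAvg hN hφ, ae_restrict_mem measurableSet_Ico] with x hlim hx
  exact tendsto_truncMax hlim.bddAbove_range hx l

lemma ae_abs_le_adicMax (hN : 1 < N) (hφ : IntegrableOn φ 𝕀) :
    ∀ᵐ x ∂volume.restrict 𝕀, |φ x| ≤ adicMax N φ x := by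
  filter_upwards [ae_tendsto_levelAvg hN hφ, ae_restrict_mem measurableSet_Ico] with x hlim hx
  rw [adicMax_eq_iSup hx]
  exact le_of_tendsto' hlim (le_ciSup hlim.bddAbove_range)

lemma integral_truncMax_rpow_le (hp : 1 < p) (hl : 0 < l) (hφ : IntegrableOn φ 𝕀)
    (hφp : IntegrableOn (fun x => |φ x| ^ p) 𝕀) (hφl : ∫ y in 𝕀, |φ y| ≤ l) (m : ℕ) :
    ∫ x in 𝕀, truncMax N l φ m x ^ p
      ≤ 2 * l ^ p + 2 * (2 ^ (p - 1) / (p - 1)) * ∫ x in 𝕀, |φ x| ^ p := by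
  have hp0 : 0 ≤ p := by linarith
  have hp1 : 0 < p - 1 := sub_pos.2 hp
  set V := truncMax N l φ m
  set q := p / (p - 1)
  set f := ∫ y in 𝕀, |φ y|
  have : 0 ≤ f := integral_nonneg fun _ => abs_nonneg _
  have hcont : Continuous fun x : ℝ => x ^ p := Real.continuous_rpow_const hp0
  have hcont' : Continuous fun x : ℝ => q * x ^ (p - 1) :=
    (Real.continuous_rpow_const hp1.le).const_mul q
  have hN : (1 : ℝ) ≤ N := mod_cast NeZero.one_le
  have hVint : IntegrableOn (fun x => V x ^ p) 𝕀 := integrableOn_comp_truncMax hcont hφ l m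
  have doob := add_mul_integral_abs_le_integral_truncMax (N := N) hcont.neg hcont'
    (fun l y hl hly _ => neg_rpow_add_rpow_sub_one_mul_le hp hl.le (hl.le.trans hly)) hl hφ
    (hφl.trans (le_mul_of_one_le_left hl.le hN)) m
  have absorb : ∫ x in 𝕀, (-V x ^ p + q * V x ^ (p - 1) * |φ x|)
      ≤ ∫ x in 𝕀, (2 ^ (p - 1) / (p - 1) * |φ x| ^ p - V x ^ p / 2) := by
    refine integral_mono (hVint.neg.add (integrableOn_comp_truncMax_mul_abs hcont' hφ l m))
      ((hφp.const_mul _).sub (hVint.div_const 2)) fun x => ?_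
    have := conjExponent_mul_rpow_sub_one_mul_le hp (hl.le.trans (le_truncMax N l φ m x))
      (abs_nonneg (φ x))
    dsimp only
    linarith
  rw [integral_sub (hφp.const_mul _) (hVint.div_const 2), integral_const_mul,
    integral_div] at absorb
  have : 0 ≤ q * l ^ (p - 1) * f := by positivity
  simp only [Pi.neg_apply] at doob
  linarith

lemma integrableOn_max_adicMax_rpow (hN : 1 < N) (hp : 1 < p) (hl : 0 < l) (hφ : IntegrableOn φ 𝕀)
    (hφp : IntegrableOn (fun x => |φ x| ^ p) 𝕀) (hφl : ∫ y in 𝕀, |φ y| ≤ l) :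
    IntegrableOn (fun x => max l (adicMax N φ x) ^ p) 𝕀 := by
  have hp0 : 0 ≤ p := by linarith
  have hcont : Continuous fun x : ℝ => x ^ p := Real.continuous_rpow_const hp0
  have hlim : ∀ᵐ x ∂volume.restrict 𝕀, Tendsto (fun m => truncMax N l φ m x ^ p) atTop
      (nhds (max l (adicMax N φ x) ^ p)) := by
    filter_upwards [ae_tendsto_truncMax hN hφ l] with x hx
    exact hx.rpow_const (Or.inr hp0)
  have bound (m : ℕ) : ∫⁻ x in 𝕀, ‖truncMax N l φ m x ^ p‖ₑ ≤ ENNReal.ofReal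
      (2 * l ^ p + 2 * (2 ^ (p - 1) / (p - 1)) * ∫ x in 𝕀, |φ x| ^ p) := by
    rw [← ofReal_integral_norm_eq_lintegral_enorm (integrableOn_comp_truncMax hcont hφ l m)]
    refine ENNReal.ofReal_le_ofReal (le_of_eq_of_le ?_
      (integral_truncMax_rpow_le (N := N) hp hl hφ hφp hφl m))
    congr 1 with x
    exact Real.norm_of_nonneg (Real.rpow_nonneg (hl.le.trans (le_truncMax N l φ m x)) p)
  exact integrable_of_tendsto hlim
    (fun m => ((measurable_truncMax N l φ m).pow_const p).aestronglyMeasurable)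
    (ne_top_of_le_ne_top ENNReal.ofReal_ne_top
      ((liminf_le_liminf (Eventually.of_forall bound)).trans_eq (liminf_const _)))

lemma le_integral_truncMax_rpow (hN : 1 < N) (hp : 1 < p) (hl : 0 < l) (hφ : IntegrableOn φ 𝕀)
    (hφl : ∫ y in 𝕀, |φ y| ≤ N * l) (m : ℕ) :
    l ^ p - jumpConst N p * l ^ (p - 1) * ∫ y in 𝕀, |φ y|
      ≤ ∫ x in 𝕀, (truncMax N l φ m x ^ p
        - jumpConst N p * truncMax N l φ m x ^ (p - 1) * |φ x|) := by
  have hpow : Continuous fun x : ℝ => x ^ p := Real.continuous_rpow_const (by linarith)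
  have hpow' : Continuous fun x : ℝ => -(jumpConst N p * x ^ (p - 1)) :=
    ((Real.continuous_rpow_const (by linarith)).const_mul _).neg
  have step (l y : ℝ) (hl : 0 < l) (hly : l ≤ y) (hy : y ≤ N * l) :
      l ^ p + -(jumpConst N p * l ^ (p - 1)) * y
        ≤ y ^ p + -(jumpConst N p * y ^ (p - 1)) * y := by
    simpa only [neg_mul, ← sub_eq_add_neg] using
      rpow_sub_jumpConst_mul_le hp (mod_cast hN) hl hly hy
  simpa only [neg_mul, ← sub_eq_add_neg] using
    add_mul_integral_abs_le_integral_truncMax hpow hpow' step hl hφ hφl m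

lemma integrableOn_max_adicMax_rpow_mul_abs (hN : 1 < N) (hp : 1 < p) (hl : 0 < l)
    (hφ : IntegrableOn φ 𝕀) (hφp : IntegrableOn (fun x => |φ x| ^ p) 𝕀)
    (hφl : ∫ y in 𝕀, |φ y| ≤ l) :
    IntegrableOn (fun x => max l (adicMax N φ x) ^ (p - 1) * |φ x|) 𝕀 := by
  refine (integrableOn_max_adicMax_rpow hN hp hl hφ hφp hφl).mono'
    (((measurable_const.max (measurable_adicMax φ)).pow_const _).aestronglyMeasurable.mul
      hφ.abs.aestronglyMeasurable) ?_
  filter_upwards [ae_abs_le_adicMax hN hφ] with x hx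
  have hV : 0 ≤ max l (adicMax N φ x) := hl.le.trans (le_max_left _ _)
  rw [Real.norm_of_nonneg (by positivity), ← rpow_sub_one_mul_self hV (zero_lt_one.trans hp)]
  gcongr
  exact hx.trans (le_max_right _ _)

lemma tendsto_integral_truncMax_rpow_sub (hN : 1 < N) (hp : 1 < p) (hl : 0 < l)
    (hφ : IntegrableOn φ 𝕀) (hφp : IntegrableOn (fun x => |φ x| ^ p) 𝕀)
    (hφl : ∫ y in 𝕀, |φ y| ≤ l) {C : ℝ} (hC : 0 ≤ C) :
    Tendsto (fun m => ∫ x in 𝕀,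
        (truncMax N l φ m x ^ p - C * truncMax N l φ m x ^ (p - 1) * |φ x|)) atTop
      (nhds (∫ x in 𝕀,
        (max l (adicMax N φ x) ^ p - C * max l (adicMax N φ x) ^ (p - 1) * |φ x|))) := by
  have hp1 : 0 ≤ p - 1 := by linarith
  have hVint := integrableOn_max_adicMax_rpow hN hp hl hφ hφp hφl
  have hVint' := integrableOn_max_adicMax_rpow_mul_abs hN hp hl hφ hφp hφl
  refine tendsto_integral_of_dominated_convergence _ (fun m => ?_)
    (hVint.add (hVint'.const_mul C)) (fun m => ?_) ?_
  · have hmeas := measurable_truncMax N l φ m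
    exact (hmeas.pow_const p).aestronglyMeasurable.sub
      (((hmeas.pow_const _).const_mul C).aestronglyMeasurable.mul hφ.abs.aestronglyMeasurable)
  · filter_upwards [ae_tendsto_truncMax hN hφ l] with x hx
    have hle := (monotone_truncMax N l φ x).ge_of_tendsto hx m
    have h0 : 0 ≤ truncMax N l φ m x := hl.le.trans (le_truncMax N l φ m x)
    refine (norm_sub_le _ _).trans ?_
    rw [Real.norm_of_nonneg (by positivity), Real.norm_of_nonneg (by positivity), mul_assoc]
    exact add_le_add (Real.rpow_le_rpow h0 hle (by linarith)) (mul_le_mul_of_nonneg_left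
      (mul_le_mul_of_nonneg_right (Real.rpow_le_rpow h0 hle hp1) (abs_nonneg _)) hC)
  · filter_upwards [ae_tendsto_truncMax hN hφ l] with x hx
    exact (hx.rpow_const (Or.inr (by linarith))).sub
      (((hx.rpow_const (Or.inr hp1)).const_mul C).mul_const _)

theorem le_integral_max_adicMax_rpow (hN : 1 < N) (hp : 1 < p) (hl : 0 < l)
    (hφ : IntegrableOn φ 𝕀) (hφp : IntegrableOn (fun x => |φ x| ^ p) 𝕀)
    (hφl : ∫ y in 𝕀, |φ y| ≤ l) :
    l ^ p - jumpConst N p * l ^ (p - 1) * (∫ y in 𝕀, |φ y|)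
        + jumpConst N p * ∫ x in 𝕀, |φ x| ^ p
      ≤ ∫ x in 𝕀, max l (adicMax N φ x) ^ p := by
  have hN' : (1 : ℝ) < N := mod_cast hN
  have hC0 : 0 ≤ jumpConst N p := zero_le_one.trans (one_le_jumpConst hN' hp)
  have hVint := integrableOn_max_adicMax_rpow hN hp hl hφ hφp hφl
  have hVint' := integrableOn_max_adicMax_rpow_mul_abs hN hp hl hφ hφp hφl
  have limit := ge_of_tendsto'
    (tendsto_integral_truncMax_rpow_sub hN hp hl hφ hφp hφl hC0)
    (le_integral_truncMax_rpow hN hp hl hφ (hφl.trans (le_mul_of_one_le_left hl.le hN'.le)))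
  have drop : ∫ x in 𝕀, |φ x| ^ p ≤ ∫ x in 𝕀, max l (adicMax N φ x) ^ (p - 1) * |φ x| := by
    refine integral_mono_ae hφp hVint' ?_
    filter_upwards [ae_abs_le_adicMax hN hφ] with x hx
    rw [← rpow_sub_one_mul_self (abs_nonneg _) (zero_lt_one.trans hp)]
    gcongr
    exact hx.trans (le_max_right _ _)
  simp only [mul_assoc] at limit
  rw [integral_sub hVint (hVint'.const_mul _), integral_const_mul, ← mul_assoc] at limit
  linarith [mul_le_mul_of_nonneg_left drop hC0]

end LowerBound

section Quantile

lemma exists_measure_Ioi_le_le_measure_Ici (ν : Measure ℝ) [IsFiniteMeasure ν] {a : ℝ}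
    {κ : ENNReal} (hκ : 0 < κ) (ha : κ ≤ ν (Ici a)) :
    ∃ l, a ≤ l ∧ ν (Ioi l) ≤ κ ∧ κ ≤ ν (Ici l) := by
  set S : Set ℝ := {t | κ ≤ ν (Ici t)}
  have hbdd : BddAbove S := by
    have htail : Tendsto (fun n : ℕ => ν (Ici (n : ℝ))) atTop (nhds 0) := by
      have hempty : ⋂ n : ℕ, Ici (n : ℝ) = ∅ :=
        eq_empty_of_forall_notMem fun x hx =>
          (exists_nat_gt x).elim fun n hn => (mem_iInter.1 hx n).not_gt hn
      simpa only [hempty, measure_empty, Function.comp_def] using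
        tendsto_measure_iInter_atTop (μ := ν) (fun n : ℕ => measurableSet_Ici.nullMeasurableSet)
          (antitone_Ici.comp_monotone Nat.mono_cast) ⟨0, measure_ne_top _ _⟩
    obtain ⟨n, hn⟩ := (htail.eventually_lt_const hκ).exists
    refine ⟨n, fun t ht => le_of_not_gt fun hnt => ?_⟩
    exact (ht.trans (measure_mono (Ici_subset_Ici.2 hnt.le))).not_gt hn
  obtain ⟨u, hu, hul, huS⟩ := exists_seq_tendsto_sSup ⟨a, ha⟩ hbdd
  obtain ⟨v, hv, hlv, hvl⟩ := exists_seq_strictAnti_tendsto (sSup S)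
  refine ⟨sSup S, le_csSup hbdd ha, ?_, ?_⟩
  · have hmono : Monotone fun n => Ici (v n) := antitone_Ici.comp hv.antitone
    rw [← iUnion_Ici_eq_Ioi_of_lt_of_tendsto hlv hvl, hmono.measure_iUnion]
    exact iSup_le fun n => (not_le.1 fun h => (le_csSup hbdd h).not_gt (hlv n)).le
  · have hinter : Ici (sSup S) = ⋂ n, Ici (u n) := by
      ext x
      simp only [mem_Ici, mem_iInter]
      exact ⟨fun hx n => (le_csSup hbdd (huS n)).trans hx, le_of_tendsto' hul⟩
    have hanti : Antitone fun n => Ici (u n) := antitone_Ici.comp_monotone hu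
    rw [hinter, hanti.measure_iInter (fun n => measurableSet_Ici.nullMeasurableSet)
      ⟨0, measure_ne_top _ _⟩]
    exact le_iInf huS

lemma exists_measurableSet_between_volume_eq {a b κ : ℝ} {A B : Set ℝ} (hA : MeasurableSet A)
    (hB : MeasurableSet B) (hAB : A ⊆ B) (hBab : B ⊆ Ico a b) (hAκ : volume.real A ≤ κ)
    (hκB : κ ≤ volume.real B) :
    ∃ E, MeasurableSet E ∧ A ⊆ E ∧ E ⊆ B ∧ volume.real E = κ := by
  set E : ℝ → Set ℝ := fun t => A ∪ B ∩ Iio t with hE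
  have hEB (t : ℝ) : E t ⊆ B := union_subset hAB inter_subset_left
  have hfin (t : ℝ) : volume (E t) ≠ ⊤ :=
    measure_ne_top_of_subset ((hEB t).trans hBab) measure_Ico_lt_top.ne
  have hlip : LipschitzWith 1 fun t => volume.real (E t) := by
    refine LipschitzWith.of_le_add fun x y => ?_
    have hsub : E x ⊆ E y ∪ Ico y x := by
      rintro z (hzA | ⟨hzB, hzx⟩)
      · exact Or.inl (Or.inl hzA)
      · exact (lt_or_ge z y).imp (fun hzy => Or.inr ⟨hzB, hzy⟩) fun hyz => ⟨hyz, hzx⟩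
    calc volume.real (E x) ≤ volume.real (E y ∪ Ico y x) :=
          measureReal_mono hsub (measure_union_ne_top (hfin y) measure_Ico_lt_top.ne)
      _ ≤ volume.real (E y) + volume.real (Ico y x) := measureReal_union_le _ _
      _ ≤ volume.real (E y) + dist x y := by
          rw [Real.volume_real_Ico, Real.dist_eq]
          gcongr
          exact max_le (le_abs_self _) (abs_nonneg _)
  have hEa : E a = A := union_eq_left.2 fun z hz => absurd (hBab hz.1).1 (not_le.2 hz.2)
  have hEb : E b = B := by
    simp only [hE, inter_eq_left.2 (hBab.trans Ico_subset_Iio_self), union_eq_right.2 hAB]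
  obtain ⟨t, ht⟩ := mem_range_of_exists_le_of_exists_ge hlip.continuous
    ⟨a, by simpa only [hEa] using hAκ⟩ ⟨b, by simpa only [hEb] using hκB⟩
  exact ⟨E t, hA.union (hB.inter measurableSet_Iio), subset_union_left, hEB t, ht⟩

lemma exists_superlevel_volume_eq {M : ℝ → ℝ} (hM : Measurable M) {a κ : ℝ}
    (ha : ∀ᵐ x ∂volume.restrict 𝕀, a ≤ M x) (hκ0 : 0 < κ) (hκ1 : κ ≤ 1) :
    ∃ l, a ≤ l ∧ ∃ E, MeasurableSet E ∧ 𝕀 ∩ M ⁻¹' Ioi l ⊆ E ∧ E ⊆ 𝕀 ∩ M ⁻¹' Ici l ∧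
      volume.real E = κ := by
  set ν := (volume.restrict 𝕀).map M with hν
  have hνS {S : Set ℝ} (hS : MeasurableSet S) : ν S = volume (𝕀 ∩ M ⁻¹' S) := by
    rw [hν, Measure.map_apply hM hS, Measure.restrict_apply (hM hS), inter_comm]
  have hfull : ν (Ici a) = 1 := by
    have : ∀ᵐ x ∂volume.restrict 𝕀, x ∈ M ⁻¹' Ici a ↔ x ∈ univ := by simpa using ha
    rw [hν, Measure.map_apply hM measurableSet_Ici, measure_congr (eventuallyEq_set.2 this)]
    simp
  obtain ⟨l, hal, hIoi, hIci⟩ := exists_measure_Ioi_le_le_measure_Ici ν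
    (ENNReal.ofReal_pos.2 hκ0) (hfull ▸ ENNReal.ofReal_le_one.2 hκ1)
  rw [hνS measurableSet_Ioi] at hIoi
  rw [hνS measurableSet_Ici] at hIci
  obtain ⟨E, hE, hlE, hEl, hEκ⟩ := exists_measurableSet_between_volume_eq
    (measurableSet_Ico.inter (hM measurableSet_Ioi))
    (measurableSet_Ico.inter (hM measurableSet_Ici))
    (inter_subset_inter_right _ (preimage_mono Ioi_subset_Ici_self)) inter_subset_left
    (ENNReal.toReal_le_of_le_ofReal hκ0.le hIoi)
    ((ENNReal.ofReal_le_iff_le_toReal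
      (measure_ne_top_of_subset inter_subset_left measure_Ico_lt_top.ne)).1 hIci)
  exact ⟨l, hal, E, hE, hlE, hEl, hEκ⟩

end Quantile

section SupMeas

variable {N : ℕ} {p κ : ℝ} {φ : ℝ → ℝ}

lemma setIntegral_le_supMeas (hM : IntegrableOn (fun x => adicMax N φ x ^ p) 𝕀)
    {E : Set ℝ} (hE : MeasurableSet E) (hEI : E ⊆ 𝕀) :
    ∫ x in E, adicMax N φ x ^ p ≤ supMeas N p (volume.real E) φ := by
  have hfin : volume E ≠ ⊤ := measure_ne_top_of_subset hEI measure_Ico_lt_top.ne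
  refine le_csSup ⟨∫ x in 𝕀, adicMax N φ x ^ p, ?_⟩
    ⟨E, hE, hEI, (ENNReal.ofReal_toReal hfin).symm, rfl⟩
  rintro _ ⟨S, -, hSI, -, rfl⟩
  exact setIntegral_mono_set hM
    (Eventually.of_forall fun x => Real.rpow_nonneg (adicMax_nonneg N φ x) p) hSI.eventuallyLE

lemma supMeas_le {a : ℝ} (ha0 : 0 ≤ a) (hp : 0 ≤ p) (ha : ∀ x ∈ 𝕀, a ≤ adicMax N φ x)
    (hM : IntegrableOn (fun x => adicMax N φ x ^ p) 𝕀) (hκ0 : 0 ≤ κ) (hκ1 : κ ≤ 1) :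
    supMeas N p κ φ ≤ (∫ x in 𝕀, adicMax N φ x ^ p) - (1 - κ) * a ^ p := by
  refine csSup_le ⟨_, Ico 0 κ, measurableSet_Ico, Ico_subset_Ico_right hκ1, by simp, rfl⟩ ?_
  rintro _ ⟨E, hE, hEI, hEκ, rfl⟩
  have hvol : volume.real (𝕀 \ E) = 1 - κ := by
    rw [measureReal_sdiff hEI hE measure_Ico_lt_top.ne]
    simp [measureReal_def, hEκ, hκ0]
  have hdiff : (1 - κ) * a ^ p ≤ ∫ x in 𝕀 \ E, adicMax N φ x ^ p := by
    rw [← hvol, ← smul_eq_mul, ← setIntegral_const]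
    exact setIntegral_mono_on
      (integrableOn_const (measure_ne_top_of_subset sdiff_subset measure_Ico_lt_top.ne))
      (hM.mono_set sdiff_subset) (measurableSet_Ico.diff hE)
      fun x hx => Real.rpow_le_rpow ha0 (ha x hx.1) hp
  linarith [setIntegral_sdiff hE hM hEI]

variable [NeZero N]

lemma exists_le_supMeas {a : ℝ} (ha : ∀ᵐ x ∂volume.restrict 𝕀, a ≤ adicMax N φ x)
    (hM : IntegrableOn (fun x => adicMax N φ x ^ p) 𝕀) (hκ0 : 0 < κ) (hκ1 : κ ≤ 1) :
    ∃ l, a ≤ l ∧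
      (∫ x in 𝕀, max l (adicMax N φ x) ^ p) - (1 - κ) * l ^ p ≤ supMeas N p κ φ := by
  obtain ⟨l, hal, E, hE, hlE, hEl, rfl⟩ :=
    exists_superlevel_volume_eq (measurable_adicMax φ) ha hκ0 hκ1
  have hEI : E ⊆ 𝕀 := hEl.trans inter_subset_left
  have hon : EqOn (fun x => max l (adicMax N φ x) ^ p) (fun x => adicMax N φ x ^ p) E :=
    fun x hx => congrArg (· ^ p) (max_eq_right (hEl hx).2)
  have hoff : EqOn (fun x => max l (adicMax N φ x) ^ p) (fun _ => l ^ p) (𝕀 \ E) :=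
    fun x hx => congrArg (· ^ p) (max_eq_left (le_of_not_gt fun h => hx.2 (hlE ⟨hx.1, h⟩)))
  have hdiff : MeasurableSet (𝕀 \ E) := measurableSet_Ico.diff hE
  have hfin : volume (𝕀 \ E) ≠ ⊤ := measure_ne_top_of_subset sdiff_subset measure_Ico_lt_top.ne
  have hmax : IntegrableOn (fun x => max l (adicMax N φ x) ^ p) 𝕀 := by
    rw [← union_sdiff_cancel hEI]
    exact ((hM.mono_set hEI).congr_fun hon.symm hE).union
      ((integrableOn_const hfin).congr_fun hoff.symm hdiff)
  refine ⟨l, hal, le_trans (le_of_eq ?_) (setIntegral_le_supMeas hM hE hEI)⟩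
  have hsplit := setIntegral_sdiff hE hmax hEI
  rw [setIntegral_congr_fun hdiff hoff, setIntegral_congr_fun hE hon, setIntegral_const,
    measureReal_sdiff hEI hE measure_Ico_lt_top.ne, smul_eq_mul] at hsplit
  simp only [Real.volume_real_Ico, sub_zero, zero_le_one, sup_of_le_left] at hsplit
  linarith

theorem le_supMeas {f F : ℝ} (hN : 1 < N) (hp : 1 < p) (hf : 0 < f) (hF : 0 < F)
    (hκ : (p - 1) / p * jumpConst N p ≤ κ) (hκ1 : κ ≤ 1) (hφ0 : ∀ x ∈ 𝕀, 0 ≤ φ x)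
    (hφf : ∫ x in 𝕀, φ x = f) (hφF : ∫ x in 𝕀, φ x ^ p = F) :
    κ * f ^ p + jumpConst N p * (F - f ^ p) ≤ supMeas N p κ φ := by
  have hC : 1 ≤ jumpConst N p := one_le_jumpConst (mod_cast hN) hp
  have hκ0 : 0 < κ := lt_of_lt_of_le (by have := sub_pos.2 hp; positivity) hκ
  have hφ : IntegrableOn φ 𝕀 := not_imp_comm.1 integral_undef (hφf.trans_ne hf.ne')
  have habs : EqOn (fun x => |φ x|) φ 𝕀 := fun x hx => abs_of_nonneg (hφ0 x hx)
  have habsp : EqOn (fun x => |φ x| ^ p) (fun x => φ x ^ p) 𝕀 :=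
    fun x hx => congrArg (· ^ p) (habs hx)
  have hφp : IntegrableOn (fun x => |φ x| ^ p) 𝕀 :=
    (show IntegrableOn (fun x => φ x ^ p) 𝕀 from
      not_imp_comm.1 integral_undef (hφF.trans_ne hF.ne')).congr_fun habsp.symm measurableSet_Ico
  rw [← setIntegral_congr_fun measurableSet_Ico habs] at hφf
  rw [← setIntegral_congr_fun measurableSet_Ico habsp] at hφF
  have hfM : ∀ᵐ x ∂volume.restrict 𝕀, f ≤ adicMax N φ x := by
    filter_upwards [ae_tendsto_levelAvg hN hφ, ae_restrict_mem measurableSet_Ico] with x hlim hx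
    exact hφf ▸ integral_abs_le_adicMax hlim.bddAbove_range hx
  have hM : IntegrableOn (fun x => adicMax N φ x ^ p) 𝕀 :=
    (integrableOn_max_adicMax_rpow hN hp hf hφ hφp hφf.le).congr_fun_ae
      (hfM.mono fun x hx => congrArg (· ^ p) (max_eq_right hx))
  obtain ⟨l, hfl, hsup⟩ := exists_le_supMeas hfM hM hκ0 hκ1
  have hmax := le_integral_max_adicMax_rpow hN hp (hf.trans_le hfl) hφ hφp (hφf.trans_le hfl)
  have hscalar := sub_rpow_le_sub_rpow_sub_one_mul hp (zero_le_one.trans hC) hκ hf.le hfl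
  rw [hφf, hφF] at hmax
  linarith

end SupMeas

section BoundedFunctions

variable {N : ℕ} {φ : ℝ → ℝ} {B p x : ℝ}

lemma abs_le_of_mem_Icc (hx : x ∈ Icc 0 B) : |x| ≤ B :=
  (abs_of_nonneg hx.1).trans_le hx.2

lemma abs_rpow_le_of_mem_Icc (hp : 0 ≤ p) (hx : x ∈ Icc 0 B) : |x ^ p| ≤ B ^ p := by
  rw [abs_of_nonneg (Real.rpow_nonneg hx.1 p)]
  exact Real.rpow_le_rpow hx.1 hx.2 hp

lemma integrableOn_rpow_of_mem_Icc (hp : 0 ≤ p) (hφ : Measurable φ)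
    (hφB : ∀ y ∈ 𝕀, φ y ∈ Icc 0 B) : IntegrableOn (fun x => φ x ^ p) 𝕀 :=
  IntegrableOn.of_bound measure_Ico_lt_top (hφ.pow_const p).aestronglyMeasurable (B ^ p)
    ((ae_restrict_iff' measurableSet_Ico).2 (Eventually.of_forall fun x hx =>
      abs_rpow_le_of_mem_Icc hp (hφB x hx)))

variable [NeZero N]

lemma adicMax_mem_Icc (hφB : ∀ y ∈ 𝕀, φ y ∈ Icc 0 B) (hx : x ∈ 𝕀) :
    adicMax N φ x ∈ Icc 0 B :=
  ⟨adicMax_nonneg N φ x, adicMax_le (fun y hy => abs_le_of_mem_Icc (hφB y hy)) hx⟩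

lemma integral_le_adicMax (hφB : ∀ y ∈ 𝕀, φ y ∈ Icc 0 B) (hx : x ∈ 𝕀) :
    ∫ y in 𝕀, φ y ≤ adicMax N φ x := by
  have habs : EqOn (fun y => |φ y|) φ 𝕀 := fun y hy => abs_of_nonneg (hφB y hy).1
  rw [← setIntegral_congr_fun measurableSet_Ico habs]
  exact integral_abs_le_adicMax
    (bddAbove_levelAvg (fun y hy => abs_le_of_mem_Icc (hφB y hy)) hx) hx

end BoundedFunctions

section Paste

variable {N : ℕ} {ψ : ℝ → ℝ} {u x B : ℝ} {i n : ℕ}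

/-- The `n`-th approximation to `paste N ψ u`: it carries a copy of `ψ` on each maximal `N`-adic
subinterval of `[0, u)` of level between `1` and `n`, and equals `1` elsewhere. -/
noncomputable def pasteAux (N : ℕ) (ψ : ℝ → ℝ) : ℕ → ℝ → ℝ → ℝ
  | 0, _, _ => 1
  | n + 1, u, x =>
    if ⌊N * x⌋₊ < ⌊N * u⌋₊ then ψ (Int.fract (N * x))
    else if ⌊N * x⌋₊ = ⌊N * u⌋₊ then pasteAux N ψ n (Int.fract (N * u)) (Int.fract (N * x))
    else 1

/-- The function on `[0, 1)` that carries a rescaled copy of `ψ` on each maximal `N`-adic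
subinterval of `[0, u)`, and equals `1` on `[u, 1)`. The approximations stabilise at every point of
`[0, 1)` other than `u`; the `limsup` merely makes the limit total and measurable. -/
noncomputable def paste (N : ℕ) (ψ : ℝ → ℝ) (u x : ℝ) : ℝ :=
  limsup (fun n => pasteAux N ψ n u x) atTop

lemma measurable_pasteAux (hψ : Measurable ψ) (n : ℕ) (u : ℝ) :
    Measurable (pasteAux N ψ n u) := by
  have hmul : Measurable fun x : ℝ => N * x := measurable_const_mul _
  have hfloor : Measurable fun x : ℝ => ⌊N * x⌋₊ := Nat.measurable_floor.comp hmul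
  have hfract : Measurable fun x : ℝ => Int.fract (N * x) := measurable_fract.comp hmul
  induction n generalizing u with
  | zero => exact measurable_const
  | succ n ih =>
    exact Measurable.ite (measurableSet_lt hfloor measurable_const) (hψ.comp hfract)
      (Measurable.ite (measurableSet_eq_fun hfloor measurable_const) ((ih _).comp hfract)
        measurable_const)

lemma measurable_paste (hψ : Measurable ψ) (u : ℝ) : Measurable (paste N ψ u) :=
  Measurable.limsup fun n => measurable_pasteAux hψ n u

lemma pasteAux_mem_Icc (hB : 1 ≤ B) (hψ : ∀ y ∈ 𝕀, ψ y ∈ Icc 0 B) (n : ℕ) (u x : ℝ) :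
    pasteAux N ψ n u x ∈ Icc 0 B := by
  have hone : (1 : ℝ) ∈ Icc 0 B := ⟨zero_le_one, hB⟩
  induction n generalizing u x with
  | zero => exact hone
  | succ n ih =>
    unfold pasteAux
    split_ifs
    exacts [hψ _ ⟨Int.fract_nonneg _, Int.fract_lt_one _⟩, ih _ _, hone]

lemma paste_mem_Icc (hB : 1 ≤ B) (hψ : ∀ y ∈ 𝕀, ψ y ∈ Icc 0 B) (u x : ℝ) :
    paste N ψ u x ∈ Icc 0 B := by
  have hmem := pasteAux_mem_Icc (N := N) hB hψ
  have hbdd : IsBoundedUnder (· ≤ ·) atTop fun n => pasteAux N ψ n u x :=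
    isBoundedUnder_of ⟨B, fun n => (hmem n u x).2⟩
  have hcobdd : IsCoboundedUnder (· ≤ ·) atTop fun n => pasteAux N ψ n u x :=
    (isBoundedUnder_of ⟨0, fun n => (hmem n u x).1⟩ :
      IsBoundedUnder (· ≥ ·) atTop _).isCoboundedUnder_le
  exact ⟨le_limsup_of_frequently_le (Frequently.of_forall fun n => (hmem n u x).1) hbdd,
    limsup_le_of_le hcobdd (Eventually.of_forall fun n => (hmem n u x).2)⟩

variable [NeZero N]

lemma paste_branch_of_lt (hi : i < ⌊N * u⌋₊) (hx : x ∈ 𝕀) :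
    paste N ψ u (branch N i x) = ψ x := by
  rw [paste, ← limsup_nat_add _ 1]
  simp only [pasteAux, floor_mul_branch i hx, fract_mul_branch i hx, if_pos hi, limsup_const]

lemma paste_branch_floor (hx : x ∈ 𝕀) :
    paste N ψ u (branch N ⌊N * u⌋₊ x) = paste N ψ (Int.fract (N * u)) x := by
  rw [paste, ← limsup_nat_add _ 1]
  simp only [pasteAux, floor_mul_branch _ hx, fract_mul_branch _ hx, lt_irrefl, if_false,
    if_true, paste]

lemma paste_branch_of_gt (hi : ⌊N * u⌋₊ < i) (hx : x ∈ 𝕀) :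
    paste N ψ u (branch N i x) = 1 := by
  rw [paste, ← limsup_nat_add _ 1]
  simp only [pasteAux, floor_mul_branch i hx, if_neg hi.not_gt, if_neg hi.ne', limsup_const]

end Paste

section SelfSimilar

variable {N : ℕ} {g : ℝ → ℝ → ℝ} {a : ℝ → ℝ} {b : ℝ}

/- The relation contracts `d` by the factor `N` along the expanding map `u ↦ fract (N * u)`. -/
lemma eq_zero_of_eq_comp_fract_div (hN : 1 < N) {d : ℝ → ℝ} {D : ℝ} (hD : ∀ v ∈ 𝕀, |d v| ≤ D)
    (hstep : ∀ v ∈ 𝕀, d v = d (Int.fract (N * v)) / N) {u : ℝ} (hu : u ∈ 𝕀) : d u = 0 := by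
  have hpow (m : ℕ) (v : ℝ) (hv : v ∈ 𝕀) : |d v| ≤ D / (N : ℝ) ^ m := by
    induction m generalizing v with
    | zero => simpa using hD v hv
    | succ m ih =>
      rw [hstep v hv, abs_div, Nat.abs_cast, pow_succ, ← div_div]
      gcongr
      exact ih _ ⟨Int.fract_nonneg _, Int.fract_lt_one _⟩
  have hlim : Tendsto (fun m : ℕ => D / (N : ℝ) ^ m) atTop (nhds 0) :=
    tendsto_const_nhds.div_atTop (tendsto_pow_atTop_atTop_of_one_lt (mod_cast hN))
  exact abs_nonpos_iff.1 (ge_of_tendsto' hlim fun m => hpow m u hu)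

/-- Self-similarity, under the `N` inverse branches, of a family `g` of functions on `[0, 1)`: on
the branches below the one containing `u`, the function `g u` is a copy of `a`; on that branch it
is a copy of another member of the family; on the branches above it is the constant `b`. -/
structure IsSelfSimilar (N : ℕ) (g : ℝ → ℝ → ℝ) (a : ℝ → ℝ) (b : ℝ) : Prop where
  branch_of_lt : ∀ u ∈ 𝕀, ∀ i < ⌊N * u⌋₊, ∀ x ∈ 𝕀, g u (branch N i x) = a x
  branch_floor : ∀ u ∈ 𝕀, ∀ x ∈ 𝕀, g u (branch N ⌊N * u⌋₊ x) = g (Int.fract (N * u)) x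
  branch_of_gt : ∀ u ∈ 𝕀, ∀ i < N, ⌊N * u⌋₊ < i → ∀ x ∈ 𝕀, g u (branch N i x) = b

lemma IsSelfSimilar.rpow (h : IsSelfSimilar N g a b) (p : ℝ) :
    IsSelfSimilar N (fun u x => g u x ^ p) (fun x => a x ^ p) (b ^ p) where
  branch_of_lt u hu i hi x hx := by rw [h.branch_of_lt u hu i hi x hx]
  branch_floor u hu x hx := by rw [h.branch_floor u hu x hx]
  branch_of_gt u hu i hi hui x hx := by rw [h.branch_of_gt u hu i hi hui x hx]

variable [NeZero N]

lemma isSelfSimilar_paste (N : ℕ) [NeZero N] (ψ : ℝ → ℝ) :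
    IsSelfSimilar N (paste N ψ) ψ 1 where
  branch_of_lt _ _ _ hi _ := paste_branch_of_lt hi
  branch_floor _ _ _ := paste_branch_floor
  branch_of_gt _ _ _ _ hi _ := paste_branch_of_gt hi

lemma floor_mul_lt {u : ℝ} (hu : u ∈ 𝕀) : ⌊N * u⌋₊ < N := by
  simpa only [pow_one] using floor_pow_mul_lt (N := N) 1 hu

lemma IsSelfSimilar.setIntegral_eq (h : IsSelfSimilar N g a b) {u : ℝ} (hu : u ∈ 𝕀)
    (hg : IntegrableOn (g u) 𝕀) :
    ∫ x in 𝕀, g u x = (⌊N * u⌋₊ * (∫ x in 𝕀, a x) + (∫ x in 𝕀, g (Int.fract (N * u)) x)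
      + (N - 1 - ⌊N * u⌋₊) * b) / N := by
  have hk : ⌊N * u⌋₊ < N := floor_mul_lt hu
  have hlt (i : ℕ) (hi : i ∈ Finset.range ⌊N * u⌋₊) :
      ∫ x in 𝕀, g u (branch N i x) = ∫ x in 𝕀, a x :=
    setIntegral_congr_fun measurableSet_Ico (h.branch_of_lt u hu i (Finset.mem_range.1 hi))
  have hfloor : ∫ x in 𝕀, g u (branch N ⌊N * u⌋₊ x) = ∫ x in 𝕀, g (Int.fract (N * u)) x :=
    setIntegral_congr_fun measurableSet_Ico (h.branch_floor u hu)
  have hgt (i : ℕ) (hi : i ∈ Finset.Ico (⌊N * u⌋₊ + 1) N) : ∫ x in 𝕀, g u (branch N i x) = b := by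
    obtain ⟨hki, hiN⟩ := Finset.mem_Ico.1 hi
    rw [setIntegral_congr_fun measurableSet_Ico (h.branch_of_gt u hu i hiN hki)]
    simp
  rw [setIntegral_eq_sum_branch (N := N) hg, ← Finset.sum_range_add_sum_Ico _ hk,
    Finset.sum_range_succ, Finset.sum_congr rfl hlt, Finset.sum_congr rfl hgt, hfloor]
  simp only [Finset.sum_const, Finset.card_range, Nat.card_Ico, nsmul_eq_mul]
  rw [Nat.cast_sub hk]
  push_cast
  ring

lemma IsSelfSimilar.integral_eq (hN : 1 < N) (h : IsSelfSimilar N g a b)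
    (hg : ∀ u ∈ 𝕀, IntegrableOn (g u) 𝕀) {B : ℝ} (hB : ∀ u ∈ 𝕀, ∀ x ∈ 𝕀, |g u x| ≤ B) {u : ℝ}
    (hu : u ∈ 𝕀) :
    ∫ x in 𝕀, g u x = u * (∫ x in 𝕀, a x) + (1 - u) * b := by
  set d : ℝ → ℝ := fun u => (∫ x in 𝕀, g u x) - (u * (∫ x in 𝕀, a x) + (1 - u) * b) with hd
  have hbound (v : ℝ) (hv : v ∈ 𝕀) : |d v| ≤ B + (|∫ x in 𝕀, a x| + |b|) := by
    refine (abs_sub _ _).trans (add_le_add ?_ ((abs_add_le _ _).trans (add_le_add ?_ ?_)))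
    · simpa using norm_setIntegral_le_of_norm_le_const (μ := volume) measure_Ico_lt_top
        (f := g v) (hB v hv)
    · rw [abs_mul, abs_of_nonneg hv.1]
      exact mul_le_of_le_one_left (abs_nonneg _) hv.2.le
    · rw [abs_mul, abs_of_nonneg (sub_nonneg.2 hv.2.le)]
      exact mul_le_of_le_one_left (abs_nonneg _) (sub_le_self _ hv.1)
  have hstep (v : ℝ) (hv : v ∈ 𝕀) : d v = d (Int.fract (N * v)) / N := by
    have hN0 : (N : ℝ) ≠ 0 := Nat.cast_ne_zero.2 (NeZero.ne N)
    have hfract : Int.fract (N * v) = N * v - ⌊N * v⌋₊ := by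
      rw [natCast_floor_eq_intCast_floor (mul_nonneg N.cast_nonneg hv.1), Int.self_sub_floor]
    simp only [hd, h.setIntegral_eq hv (hg v hv)]
    generalize ∫ x in 𝕀, g (Int.fract (N * v)) x = J
    rw [hfract]
    field_simp
    ring
  exact sub_eq_zero.1 (eq_zero_of_eq_comp_fract_div hN hbound hstep hu)

end SelfSimilar

section PasteIntegral

variable {N : ℕ} [NeZero N] {ψ : ℝ → ℝ} {u B p : ℝ}

lemma integral_paste_rpow (hN : 1 < N) (hp : 0 ≤ p) (hB : 1 ≤ B) (hψ : Measurable ψ)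
    (hψB : ∀ y ∈ 𝕀, ψ y ∈ Icc 0 B) (hu : u ∈ 𝕀) :
    ∫ x in 𝕀, paste N ψ u x ^ p = u * (∫ x in 𝕀, ψ x ^ p) + (1 - u) := by
  have hmem := paste_mem_Icc (N := N) hB hψB
  simpa using ((isSelfSimilar_paste N ψ).rpow p).integral_eq hN
    (fun v _ => integrableOn_rpow_of_mem_Icc hp (measurable_paste hψ v) fun x _ => hmem v x)
    (fun v _ x _ => abs_rpow_le_of_mem_Icc hp (hmem v x)) hu

lemma IsSelfSimilar.map_adicMax {g : ℝ → ℝ → ℝ} {a : ℝ → ℝ} {b : ℝ} (h : IsSelfSimilar N g a b)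
    (hb : 0 ≤ b) (hgB : ∀ u ∈ 𝕀, ∀ x ∈ 𝕀, |g u x| ≤ B) (hgb : ∀ u ∈ 𝕀, ∫ x in 𝕀, |g u x| = b)
    (hab : ∀ x ∈ 𝕀, b ≤ adicMax N a x) :
    IsSelfSimilar N (fun u => adicMax N (g u)) (adicMax N a) b where
  branch_of_lt u hu i hi x hx := by
    have hcopy : EqOn (g u ∘ branch N i) a 𝕀 := h.branch_of_lt u hu i hi
    rw [adicMax_branch (hi.trans (floor_mul_lt hu)) (hgB u hu) hx, adicMax_congr hcopy, hgb u hu,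
      max_eq_right (hab x hx)]
  branch_floor u hu x hx := by
    have hcopy : EqOn (g u ∘ branch N ⌊N * u⌋₊) (g (Int.fract (N * u))) 𝕀 := h.branch_floor u hu
    have hu' : Int.fract (N * u) ∈ 𝕀 := ⟨Int.fract_nonneg _, Int.fract_lt_one _⟩
    have hle := integral_abs_le_adicMax (bddAbove_levelAvg (N := N) (hgB _ hu') hx) hx
    rw [hgb _ hu'] at hle
    rw [adicMax_branch (floor_mul_lt hu) (hgB u hu) hx, adicMax_congr hcopy, hgb u hu,
      max_eq_right hle]
  branch_of_gt u hu i hi hui x hx := by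
    have hconst : EqOn (g u ∘ branch N i) (fun _ => b) 𝕀 := h.branch_of_gt u hu i hi hui
    rw [adicMax_branch hi (hgB u hu) hx, adicMax_congr hconst, hgb u hu, adicMax_const hb hx,
      max_self]

lemma integral_paste (hN : 1 < N) (hB : 1 ≤ B) (hψ : Measurable ψ)
    (hψB : ∀ y ∈ 𝕀, ψ y ∈ Icc 0 B) (hψ1 : ∫ x in 𝕀, ψ x = 1) (hu : u ∈ 𝕀) :
    ∫ x in 𝕀, paste N ψ u x = 1 := by
  simpa [hψ1] using integral_paste_rpow hN zero_le_one hB hψ hψB hu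

lemma integral_adicMax_paste_rpow (hN : 1 < N) (hp : 0 ≤ p) (hB : 1 ≤ B) (hψ : Measurable ψ)
    (hψB : ∀ y ∈ 𝕀, ψ y ∈ Icc 0 B) (hψ1 : ∫ x in 𝕀, ψ x = 1) (hu : u ∈ 𝕀) :
    ∫ x in 𝕀, adicMax N (paste N ψ u) x ^ p
      = u * (∫ x in 𝕀, adicMax N ψ x ^ p) + (1 - u) := by
  have hmem (v x : ℝ) : paste N ψ v x ∈ Icc 0 B := paste_mem_Icc hB hψB v x
  have hint (v : ℝ) (hv : v ∈ 𝕀) : ∫ x in 𝕀, |paste N ψ v x| = 1 := by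
    simp only [abs_of_nonneg (hmem v _).1, integral_paste hN hB hψ hψB hψ1 hv]
  have hle (x : ℝ) (hx : x ∈ 𝕀) : 1 ≤ adicMax N ψ x := hψ1 ▸ integral_le_adicMax hψB hx
  have hsim := (isSelfSimilar_paste N ψ).map_adicMax zero_le_one
    (fun v _ x _ => abs_le_of_mem_Icc (hmem v x)) hint hle
  have hM (v x : ℝ) (hx : x ∈ 𝕀) : adicMax N (paste N ψ v) x ∈ Icc 0 B :=
    adicMax_mem_Icc (fun y _ => hmem v y) hx
  simpa using (hsim.rpow p).integral_eq hN
    (fun v _ => integrableOn_rpow_of_mem_Icc hp (measurable_adicMax _) (hM v))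
    (fun v _ x hx => abs_rpow_le_of_mem_Icc hp (hM v x hx)) hu

end PasteIntegral

section Spike

variable {N : ℕ} {p : ℝ}

/-- The normalised indicator `N ^ r * 1_[0, N⁻ʳ)` of the leftmost `N`-adic interval of level `r`. -/
noncomputable def spike (N r : ℕ) (x : ℝ) : ℝ :=
  if (N : ℝ) ^ r * x < 1 then (N : ℝ) ^ r else 0

lemma measurable_spike (N r : ℕ) : Measurable (spike N r) :=
  Measurable.ite (measurableSet_lt (measurable_const_mul _) measurable_const)
    measurable_const measurable_const

lemma spike_mem_Icc (N r : ℕ) (x : ℝ) : spike N r x ∈ Icc 0 ((N : ℝ) ^ r) := by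
  have hNr : (0 : ℝ) ≤ (N : ℝ) ^ r := by positivity
  unfold spike
  split_ifs
  exacts [right_mem_Icc.2 hNr, left_mem_Icc.2 hNr]

lemma spike_zero {x : ℝ} (hx : x ∈ 𝕀) : spike N 0 x = 1 := by
  simp [spike, hx.2]

variable [NeZero N]

lemma spike_succ_branch_zero (N r : ℕ) [NeZero N] (x : ℝ) :
    spike N (r + 1) (branch N 0 x) = N * spike N r x := by
  rw [spike, spike, pow_succ, mul_assoc, mul_branch, Nat.cast_zero, zero_add, mul_ite, mul_zero,
    mul_comm _ (N : ℝ)]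

lemma spike_succ_branch_succ (N r : ℕ) [NeZero N] (i : ℕ) {x : ℝ} (hx : x ∈ 𝕀) :
    spike N (r + 1) (branch N (i + 1) x) = 0 := by
  have hNr : (1 : ℝ) ≤ (N : ℝ) ^ r := one_le_pow₀ (mod_cast NeZero.one_le)
  have hix : (1 : ℝ) ≤ (i + 1 : ℕ) + x := by
    push_cast
    linarith [hx.1, i.cast_nonneg (α := ℝ)]
  rw [spike, pow_succ, mul_assoc, mul_branch,
    if_neg (one_le_mul_of_one_le_of_one_le hNr hix).not_gt]

lemma setIntegral_eq_of_branch_succ_eq {g a : ℝ → ℝ} {b : ℝ} (hg : IntegrableOn g 𝕀)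
    (hzero : ∀ x ∈ 𝕀, g (branch N 0 x) = a x)
    (hsucc : ∀ i, i + 1 < N → ∀ x ∈ 𝕀, g (branch N (i + 1) x) = b) :
    ∫ x in 𝕀, g x = ((∫ x in 𝕀, a x) + (N - 1) * b) / N := by
  obtain ⟨n, rfl⟩ : ∃ n, N = n + 1 := Nat.exists_eq_add_one.2 (NeZero.pos N)
  have hb (i : ℕ) (hi : i ∈ Finset.range n) : ∫ x in 𝕀, g (branch (n + 1) (i + 1) x) = b := by
    rw [setIntegral_congr_fun measurableSet_Ico
      (hsucc i (Nat.succ_lt_succ (Finset.mem_range.1 hi)))]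
    simp
  rw [setIntegral_eq_sum_branch (N := n + 1) hg, Finset.sum_range_succ', Finset.sum_congr rfl hb,
    setIntegral_congr_fun measurableSet_Ico hzero]
  simp
  ring

lemma integral_spike_rpow (hp : 0 < p) (r : ℕ) :
    ∫ x in 𝕀, spike N r x ^ p = ((N : ℝ) ^ p / N) ^ r := by
  induction r with
  | zero =>
    rw [setIntegral_congr_fun measurableSet_Ico fun x hx => congrArg (· ^ p) (spike_zero hx)]
    simp
  | succ r ih =>
    have hint : IntegrableOn (fun x => spike N (r + 1) x ^ p) 𝕀 :=
      integrableOn_rpow_of_mem_Icc hp.le (measurable_spike N _) fun x _ => spike_mem_Icc N _ x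
    have hzero (x : ℝ) : spike N (r + 1) (branch N 0 x) ^ p = (N : ℝ) ^ p * spike N r x ^ p := by
      rw [spike_succ_branch_zero, Real.mul_rpow N.cast_nonneg (spike_mem_Icc N r x).1]
    rw [setIntegral_eq_of_branch_succ_eq hint (fun x _ => hzero x)
      fun i _ x hx => by rw [spike_succ_branch_succ N r i hx, Real.zero_rpow hp.ne'],
      integral_const_mul, ih]
    ring

lemma integral_spike (r : ℕ) : ∫ x in 𝕀, spike N r x = 1 := by
  simpa using integral_spike_rpow (N := N) zero_lt_one r

lemma one_le_adicMax_spike (r : ℕ) {x : ℝ} (hx : x ∈ 𝕀) : 1 ≤ adicMax N (spike N r) x :=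
  (integral_spike r).symm.trans_le (integral_le_adicMax (fun y _ => spike_mem_Icc N r y) hx)

lemma adicMax_spike_succ_branch_zero (r : ℕ) {x : ℝ} (hx : x ∈ 𝕀) :
    adicMax N (spike N (r + 1)) (branch N 0 x) = N * adicMax N (spike N r) x := by
  have hmem := spike_mem_Icc N (r + 1)
  have hN : (1 : ℝ) ≤ N := mod_cast NeZero.one_le
  have hcomp : spike N (r + 1) ∘ branch N 0 = fun y => N * spike N r y :=
    funext (spike_succ_branch_zero N r)
  rw [adicMax_branch (NeZero.pos N) (fun y _ => abs_le_of_mem_Icc (hmem y)) hx, hcomp,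
    adicMax_const_mul N.cast_nonneg]
  simp only [abs_of_nonneg (hmem _).1, integral_spike]
  exact max_eq_right (one_le_mul_of_one_le_of_one_le hN (one_le_adicMax_spike r hx))

lemma adicMax_spike_succ_branch_succ (r : ℕ) {i : ℕ} (hi : i + 1 < N) {x : ℝ} (hx : x ∈ 𝕀) :
    adicMax N (spike N (r + 1)) (branch N (i + 1) x) = 1 := by
  have hmem := spike_mem_Icc N (r + 1)
  have hcomp : EqOn (spike N (r + 1) ∘ branch N (i + 1)) (fun _ => 0) 𝕀 :=
    fun y hy => spike_succ_branch_succ N r i hy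
  rw [adicMax_branch hi (fun y _ => abs_le_of_mem_Icc (hmem y)) hx, adicMax_congr hcomp,
    adicMax_const le_rfl hx]
  simp only [abs_of_nonneg (hmem _).1, integral_spike]
  exact max_eq_left zero_le_one

lemma integral_adicMax_spike_rpow (hN : 1 < N) (hp : 1 < p) (r : ℕ) :
    ∫ x in 𝕀, adicMax N (spike N r) x ^ p
      = 1 + jumpConst N p * (((N : ℝ) ^ p / N) ^ r - 1) := by
  induction r with
  | zero =>
    have hone : EqOn (adicMax N (spike N 0) · ^ p) (fun _ => 1) 𝕀 := fun x hx => by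
      have hcongr : EqOn (spike N 0) (fun _ => 1) 𝕀 := fun y hy => spike_zero hy
      simp only [adicMax_congr hcongr, adicMax_const zero_le_one hx, Real.one_rpow]
    rw [setIntegral_congr_fun measurableSet_Ico hone]
    simp
  | succ r ih =>
    have hint : IntegrableOn (fun x => adicMax N (spike N (r + 1)) x ^ p) 𝕀 :=
      integrableOn_rpow_of_mem_Icc (by linarith) (measurable_adicMax _)
        fun x hx => adicMax_mem_Icc (fun y _ => spike_mem_Icc N _ y) hx
    have hzero (x : ℝ) (hx : x ∈ 𝕀) : adicMax N (spike N (r + 1)) (branch N 0 x) ^ p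
        = (N : ℝ) ^ p * adicMax N (spike N r) x ^ p := by
      rw [adicMax_spike_succ_branch_zero r hx, Real.mul_rpow N.cast_nonneg (adicMax_nonneg N _ x)]
    have hC : jumpConst N p * ((N : ℝ) ^ p - N) = (N : ℝ) ^ p - 1 :=
      div_mul_cancel₀ _ (rpow_sub_self_pos (mod_cast hN) hp).ne'
    have hN0 : (N : ℝ) ≠ 0 := Nat.cast_ne_zero.2 (NeZero.ne N)
    rw [setIntegral_eq_of_branch_succ_eq hint hzero
      fun i hi x hx => by rw [adicMax_spike_succ_branch_succ r hi hx, Real.one_rpow],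
      integral_const_mul, ih, pow_succ]
    field_simp
    linear_combination -hC

end Spike

section Extremal

variable {N : ℕ} [NeZero N] {p κ f F : ℝ}

lemma exists_integral_adicMax_rpow_eq (hN : 1 < N) (hp : 1 < p) (hF : 1 ≤ F) :
    ∃ φ : ℝ → ℝ, Measurable φ ∧ (∃ B, ∀ x, φ x ∈ Icc 0 B) ∧ ∫ x in 𝕀, φ x = 1 ∧
      ∫ x in 𝕀, φ x ^ p = F ∧
      ∫ x in 𝕀, adicMax N φ x ^ p = 1 + jumpConst N p * (F - 1) := by
  have hN0 : (0 : ℝ) < N := Nat.cast_pos.2 (NeZero.pos N)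
  have hp0 : 0 < p := zero_lt_one.trans hp
  have hgrowth : 1 < (N : ℝ) ^ p / N :=
    (one_lt_div hN0).2 (sub_pos.1 (rpow_sub_self_pos (mod_cast hN) hp))
  obtain ⟨r, hr⟩ := pow_unbounded_of_one_lt F hgrowth
  set G := ((N : ℝ) ^ p / N) ^ r
  have hG1 : 0 < G - 1 := by linarith
  set u := (F - 1) / (G - 1)
  have huI : u ∈ 𝕀 := ⟨div_nonneg (sub_nonneg.2 hF) hG1.le, (div_lt_one hG1).2 (by linarith)⟩
  have huG : u * (G - 1) = F - 1 := div_mul_cancel₀ _ hG1.ne'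
  have hB : (1 : ℝ) ≤ (N : ℝ) ^ r := one_le_pow₀ (mod_cast NeZero.one_le)
  have hmem : ∀ y ∈ 𝕀, spike N r y ∈ Icc 0 ((N : ℝ) ^ r) := fun y _ => spike_mem_Icc N r y
  have hmeas := measurable_spike N r
  refine ⟨paste N (spike N r) u, measurable_paste hmeas u, ⟨_, paste_mem_Icc hB hmem u⟩,
    integral_paste hN hB hmeas hmem (integral_spike r) huI, ?_, ?_⟩
  · rw [integral_paste_rpow hN hp0.le hB hmeas hmem huI, integral_spike_rpow hp0]
    linear_combination huG
  · rw [integral_adicMax_paste_rpow hN hp0.le hB hmeas hmem (integral_spike r) huI,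
      integral_adicMax_spike_rpow hN hp]
    linear_combination jumpConst N p * huG

theorem exists_supMeas_le (hN : 1 < N) (hp : 1 < p) (hf : 0 < f) (hfF : f ^ p ≤ F)
    (hκ0 : 0 ≤ κ) (hκ1 : κ ≤ 1) :
    ∃ φ : ℝ → ℝ, Measurable φ ∧ (∀ x ∈ 𝕀, 0 ≤ φ x) ∧ ∫ x in 𝕀, φ x = f ∧
      ∫ x in 𝕀, φ x ^ p = F ∧
      supMeas N p κ φ ≤ κ * f ^ p + jumpConst N p * (F - f ^ p) := by
  have hp0 : 0 ≤ p := by linarith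
  have hfp : 0 < f ^ p := Real.rpow_pos_of_pos hf p
  obtain ⟨φ, hφ, ⟨B, hφB⟩, hφ1, hφF, hφM⟩ :=
    exists_integral_adicMax_rpow_eq hN hp ((one_le_div hfp).2 hfF)
  have hM (x : ℝ) : adicMax N (fun y => f * φ y) x = f * adicMax N φ x :=
    adicMax_const_mul hf.le φ x
  have hMp (x : ℝ) : adicMax N (fun y => f * φ y) x ^ p = f ^ p * adicMax N φ x ^ p := by
    rw [hM, Real.mul_rpow hf.le (adicMax_nonneg N φ x)]
  have hfM (x : ℝ) (hx : x ∈ 𝕀) : f ≤ adicMax N (fun y => f * φ y) x := by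
    have hle : 1 ≤ adicMax N φ x := hφ1 ▸ integral_le_adicMax (fun y _ => hφB y) hx
    exact hM x ▸ le_mul_of_one_le_right hf.le hle
  have hint : IntegrableOn (fun x => adicMax N (fun y => f * φ y) x ^ p) 𝕀 := by
    simp only [hMp]
    exact (integrableOn_rpow_of_mem_Icc hp0 (measurable_adicMax φ)
      fun x hx => adicMax_mem_Icc (fun y _ => hφB y) hx).const_mul _
  refine ⟨fun x => f * φ x, hφ.const_mul f, fun x _ => mul_nonneg hf.le (hφB x).1, ?_, ?_, ?_⟩
  · rw [integral_const_mul, hφ1, mul_one]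
  · simp only [Real.mul_rpow hf.le (hφB _).1, integral_const_mul, hφF, mul_div_cancel₀ F hfp.ne']
  · refine (supMeas_le hf.le hp0 hfM hint hκ0 hκ1).trans_eq ?_
    simp only [hMp, integral_const_mul, hφM]
    field_simp
    ring

end Extremal

theorem stmt2 (N : ℕ) (hN : 2 ≤ N) (p f F κ c : ℝ) (hp : 1 < p)
    (hf : 0 < f) (hF : 0 < F) (hfF : f ^ p ≤ F)
    (hc : c = ((p - 1) / p) * (((N : ℝ) ^ p - 1) / ((N : ℝ) ^ p - N)))
    (hκ1 : c ≤ κ) (hκ2 : κ ≤ 1) :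
    Dp N p F f κ =
      κ * f ^ p + (((N : ℝ) ^ p - 1) / ((N : ℝ) ^ p - N)) * (F - f ^ p) := by
  have : NeZero N := ⟨by omega⟩
  have hN1 : 1 < N := hN
  have hC : 1 ≤ jumpConst N p := one_le_jumpConst (mod_cast hN1) hp
  have : 0 < p - 1 := sub_pos.2 hp
  have hκ : (p - 1) / p * jumpConst N p ≤ κ := hc ▸ hκ1
  have hκ0 : 0 ≤ κ := le_trans (by positivity) hκ
  obtain ⟨φ, hφ, hφ0, hφf, hφF, hle⟩ := exists_supMeas_le hN1 hp hf hfF hκ0 hκ2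
  refine IsLeast.csInf_eq ⟨⟨φ, hφ, hφ0, hφf, hφF, ?_⟩, ?_⟩
  · exact le_antisymm (le_supMeas hN1 hp hf hF hκ hκ2 hφ0 hφf hφF) hle
  · rintro _ ⟨ψ, -, hψ0, hψf, hψF, rfl⟩
    exact le_supMeas hN1 hp hf hF hκ hκ2 hψ0 hψf hψF
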